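/- Let N be a positive even integer, τ ∈ H, and x₀ ∈ ℝ. Then lim_{x → x₀} τ^{-1/2} G_{−1/τ}(x) = (e(1/8)/N) · ∑_{n ∈ ℤ} g_τ(n/N) e(n x₀ / N), where G_σ(x) := ∑_{n ∈ ℤ} g_σ(Nn + x) and τ^{-1/2} is the principal branch; the series on the right converges absolutely. -/

import Mathlib

open Complex MeasureTheory
open scoped Classical

noncomputable section

/-- `e(a) = exp(2πia)`. -/
def e (a : ℂ) : ℂ := Complex.exp (2 * (Real.pi : ℂ) * Complex.I * a)

/-- The Fourier transform `F(g)(x) = ∫ g(w) e(wx) dw`. -/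
def fourierT (g : ℝ → ℂ) (x : ℝ) : ℂ := ∫ w : ℝ, g w * e ((w * x : ℝ))

/-- The operator `E_σ(f)(x) = e(x²σ/2) ∫_0^x e(-w²σ/2) f(w) dw`. -/
def Eop (σ : ℂ) (f : ℝ → ℂ) (x : ℝ) : ℂ :=
  e ((x : ℂ)^2 * σ / 2) * ∫ w in (0:ℝ)..x, e (-(w : ℂ)^2 * σ / 2) * f w

/-- `ω_τ(x) = e(-x²τ/2) ∑_{m ∈ ℤ+1/2, m ≥ |x|} e(m²τ/2 + m/2)`. -/
def omega (τ : ℂ) (x : ℝ) : ℂ :=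
  e (-(x : ℂ)^2 * τ / 2) *
    ∑' m : ℤ, if |x| ≤ (m : ℝ) + 1/2 then
      e (((m : ℂ) + 1/2)^2 / 2 * τ + ((m : ℂ) + 1/2) / 2) else 0

/-- `η³(τ) = -i ∑_{m ∈ ℤ+1/2} m e(m²τ/2 + m/2)`. -/
def eta3 (τ : ℂ) : ℂ :=
  -Complex.I * ∑' m : ℤ, ((m : ℂ) + 1/2) * e (((m : ℂ) + 1/2)^2 / 2 * τ + ((m : ℂ) + 1/2) / 2)

/-- The complementary error function. -/
def erfc (x : ℝ) : ℝ := (2 / Real.sqrt Real.pi) * ∫ t in Set.Ioi x, Real.exp (-t^2)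

/-- `g⁺_τ`. -/
def gplus (τ : ℂ) (x : ℝ) : ℂ :=
  e (-(x : ℂ)^2 * τ / 2) * ((Real.sign x : ℂ) / (Complex.I * eta3 τ)) *
    ∑' m : ℤ, if |x| < (m : ℝ) + 1/2 then
      (((m : ℝ) + 1/2 - |x| : ℝ) : ℂ) * e (((m : ℂ) + 1/2)^2 / 2 * τ + ((m : ℂ) + 1/2) / 2)
    else 0

/-- `g*_τ`. -/
def gstar (τ : ℂ) (x : ℝ) : ℂ :=
  e (-(x : ℂ)^2 * τ / 2) * ((Real.sign x : ℂ) / 2) *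
    (erfc (Real.sqrt (2 * Real.pi * τ.im) * |x|) : ℂ)

/-- `g_τ = g⁺_τ - g*_τ`. -/
def gfun (τ : ℂ) (x : ℝ) : ℂ := gplus τ x - gstar τ x

/-- The operator `ξ_k f = 2i v^k conj(∂f/∂τ̄)`, with `∂/∂τ̄ = (1/2)(∂/∂u + i ∂/∂v)`. -/
def xi (k : ℝ) (f : ℂ → ℂ) (τ : ℂ) : ℂ :=
  2 * Complex.I * ((τ.im ^ k : ℝ) : ℂ) *
    (starRingEnd ℂ) ((1/2 : ℂ) * (fderiv ℝ f τ 1 + Complex.I * fderiv ℝ f τ Complex.I))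

/-- Sum of divisors function `σ₁`. -/
def sigma1 (n : ℕ) : ℕ := ∑ d ∈ Nat.divisors n, d

/-- The weight 2 Eisenstein series `E₂`. -/
def E2 (τ : ℂ) : ℂ := 1 - 24 * ∑' n : ℕ, (sigma1 (n+1) : ℂ) * e ((n + 1 : ℂ) * τ)

/-- `ϑ̃_{N,h}`. -/
def tvtheta (N : ℕ) (h : ℝ) (τ : ℂ) : ℂ :=
  (if ∃ m : ℤ, h = (m : ℝ) + 1/2 then
      e ((h : ℂ) / 2) * E2 τ / (12 * (N : ℂ) * Complex.I * eta3 τ) else 0)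
  + ∑' n : ℤ, gfun τ ((N : ℝ) * n + h)

/-- The Schwartz function `φ_τ(x,y) = √(2v)·x·e(x²τ/2 - y²τ̄/2)`. -/
def Phi (τ : ℂ) (x y : ℝ) : ℂ :=
  (Real.sqrt (2 * τ.im) : ℂ) * (x : ℂ) *
    e ((x : ℂ)^2 * τ / 2 - (y : ℂ)^2 * (starRingEnd ℂ) τ / 2)

/-- The signature (1,1) bilinear form `B((a₁,a₂),(b₁,b₂)) = a₁b₂ + a₂b₁`. -/
def Bform (a b : ℝ × ℝ) : ℝ := a.1 * b.2 + a.2 * b.1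

/-- `Z⁺_t = (t/√2, t⁻¹/√2)`. -/
def Zp (t : ℝ) : ℝ × ℝ := (t / Real.sqrt 2, t⁻¹ / Real.sqrt 2)

/-- `Z⁻_t = (t/√2, -t⁻¹/√2)`. -/
def Zm (t : ℝ) : ℝ × ℝ := (t / Real.sqrt 2, -t⁻¹ / Real.sqrt 2)

end

/-!
Write `D_σ f = f' + 2πiσx f` and `m = n + 1/2`. As a distribution,
`D_σ² g_σ = (iη³(σ))⁻¹ ∑ₙ e(m/2) δ_m - c x e(-x²σ̄/2)`: the jump of `g⁺_σ` at `0` is exactly that of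
`g*_σ`. The Fourier transform intertwines `D_{-1/τ}` with a multiple of `D_τ`, and both terms on the
right transform into their counterparts at `τ`, the first by Poisson summation and the modularity of
`η³`, the second as a Gaussian. Hence `𝓕 g_{-1/τ}` and `i(-iτ)^{1/2} g_τ` differ by a solution
`(ax + b) e(-x²τ/2)` of `D_τ² = 0`, which decay rules out. Poisson summation for `g_{-1/τ}`, tested
against functions supported away from `ℤ + 1/2`, where the periodisation converges locally
uniformly, gives the formula at those points, and continuity of the right side gives the limit at
every point.
-/

noncomputable section

open Filter Set Asymptotics
open scoped Topology FourierTransform SchwartzMap ContDiff Real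

theorem norm_e (a : ℂ) : ‖e a‖ = Real.exp (-(2 * π * a.im)) := by
  simp [e, Complex.norm_exp]

theorem norm_e_ofReal (a : ℝ) : ‖e a‖ = 1 := by
  simp [norm_e]

theorem e_add (a b : ℂ) : e (a + b) = e a * e b := by
  simp only [e, mul_add, Complex.exp_add]

theorem e_intCast (n : ℤ) : e n = 1 :=
  Complex.exp_eq_one_iff.2 ⟨n, by ring⟩

theorem e_half : e (1 / 2) = -1 := by
  rw [e, ← Complex.exp_pi_mul_I]
  congr 1
  ring

theorem e_quarter : e (1 / 4) = I := by
  rw [e, show 2 * (π : ℂ) * I * (1 / 4) = π / 2 * I by ring, Complex.exp_pi_div_two_mul_I]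

theorem e_natCast_div_two (n : ℕ) : e (n / 2) = (-1) ^ n := by
  rw [e, ← e_half, e, ← Complex.exp_nat_mul]
  congr 1
  ring

theorem differentiable_e : Differentiable ℂ e :=
  (differentiable_id.const_mul _).cexp

theorem continuous_e : Continuous e := differentiable_e.continuous

theorem fourier_coe_eq_e (n : ℤ) (x : ℝ) :
    fourier n (x : UnitAddCircle) = e ((n * x : ℝ) : ℂ) := by
  rw [fourier_coe_apply, e]
  push_cast
  ring_nf

theorem fourier_eq_integral_e (f : ℝ → ℂ) (w : ℝ) :
    𝓕 f w = ∫ v : ℝ, e ((-(v * w) : ℝ) : ℂ) * f v := by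
  rw [Real.fourier_real_eq_integral_exp_smul]
  congr 1
  funext v
  rw [e, smul_eq_mul]
  congr 2
  push_cast
  ring

theorem fourier_const_mul (c : ℂ) (f : ℝ → ℂ) (w : ℝ) :
    𝓕 (fun x => c * f x) w = c * 𝓕 f w := by
  rw [fourier_eq_integral_e, fourier_eq_integral_e, ← integral_const_mul]
  congr 1
  funext v
  ring

theorem fourier_e_mul (f : ℝ → ℂ) (a w : ℝ) :
    𝓕 (fun x : ℝ => e ((a * x : ℝ) : ℂ) * f x) w = 𝓕 f (w - a) := by
  rw [fourier_eq_integral_e, fourier_eq_integral_e]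
  congr 1
  funext v
  rw [← mul_assoc, ← e_add]
  congr 2
  push_cast
  ring

theorem ne_zero_of_im_pos {τ : ℂ} (hτ : 0 < τ.im) : τ ≠ 0 := by
  rintro rfl
  simp at hτ

theorem im_neg_one_div (τ : ℂ) : (-1 / τ).im = τ.im / ‖τ‖ ^ 2 := by
  rw [neg_div, one_div, Complex.neg_im, Complex.inv_im, neg_div, neg_neg,
    Complex.normSq_eq_norm_sq]

theorem neg_one_div_im_pos {τ : ℂ} (hτ : 0 < τ.im) : 0 < (-1 / τ).im := by
  rw [im_neg_one_div]
  exact div_pos hτ (pow_pos (norm_pos_iff.2 (ne_zero_of_im_pos hτ)) 2)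

/-- The summand `e(m²τ/2 + m/2)` of the theta series, indexed by `n = m - 1/2 ∈ ℤ`. -/
def thetaCoeff (τ : ℂ) (n : ℤ) : ℂ :=
  e (((n : ℂ) + 1 / 2) ^ 2 / 2 * τ + ((n : ℂ) + 1 / 2) / 2)

theorem norm_thetaCoeff (τ : ℂ) (n : ℤ) :
    ‖thetaCoeff τ n‖ = Real.exp (-(π * τ.im * ((n : ℝ) + 1 / 2) ^ 2)) := by
  have h : ((n : ℂ) + 1 / 2) ^ 2 / 2 * τ + ((n : ℂ) + 1 / 2) / 2 =
      ((((n : ℝ) + 1 / 2) ^ 2 / 2 : ℝ) : ℂ) * τ + ((((n : ℝ) + 1 / 2) / 2 : ℝ) : ℂ) := by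
    push_cast
    ring
  rw [thetaCoeff, norm_e, h, Complex.add_im, Complex.ofReal_im, Complex.im_ofReal_mul]
  congr 1
  ring

theorem thetaCoeff_neg_add_one (τ : ℂ) (n : ℤ) : thetaCoeff τ (-(n + 1)) = -thetaCoeff τ n := by
  have h : (((-(n + 1) : ℤ) : ℂ) + 1 / 2) ^ 2 / 2 * τ + (((-(n + 1) : ℤ) : ℂ) + 1 / 2) / 2 =
      ((n : ℂ) + 1 / 2) ^ 2 / 2 * τ + ((n : ℂ) + 1 / 2) / 2 + ((-(n + 1) : ℤ) : ℂ) + 1 / 2 := by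
    push_cast
    ring
  rw [thetaCoeff, h, e_add, e_add, e_intCast, e_half, thetaCoeff]
  ring

theorem summable_pow_mul_norm_thetaCoeff {τ : ℂ} (hτ : 0 < τ.im) (k : ℕ) :
    Summable fun n : ℕ => ((n : ℝ) + 1 / 2) ^ k * ‖thetaCoeff τ n‖ := by
  have hr : 0 < π * τ.im := by positivity
  have hgeom := ((Real.summable_pow_mul_exp_neg_nat_mul k hr).comp_injective
    (add_left_injective 1)).mul_left (Real.exp (π * τ.im))
  refine hgeom.of_nonneg_of_le (fun n => by positivity) fun n => ?_
  have hexp : ‖thetaCoeff τ n‖ ≤ Real.exp (π * τ.im) * Real.exp (-(π * τ.im) * (n + 1 : ℕ)) := by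
    rw [norm_thetaCoeff, ← Real.exp_add, Real.exp_le_exp]
    push_cast
    nlinarith [mul_nonneg hr.le (sq_nonneg (n : ℝ))]
  calc ((n : ℝ) + 1 / 2) ^ k * ‖thetaCoeff τ n‖
      ≤ ((n + 1 : ℕ) : ℝ) ^ k * (Real.exp (π * τ.im) * Real.exp (-(π * τ.im) * (n + 1 : ℕ))) := by
        gcongr
        push_cast
        linarith
    _ = _ := by simp only [Function.comp_apply]; ring

theorem summable_mul_thetaCoeff_nat {τ : ℂ} (hτ : 0 < τ.im) :
    Summable fun n : ℕ => ((n : ℂ) + 1 / 2) * thetaCoeff τ n := by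
  refine .of_norm ((summable_pow_mul_norm_thetaCoeff hτ 1).congr fun n => ?_)
  have hcast : (n : ℂ) + 1 / 2 = (((n : ℝ) + 1 / 2 : ℝ) : ℂ) := by push_cast; ring
  rw [norm_mul, pow_one, hcast, Complex.norm_of_nonneg (by positivity)]

theorem mul_thetaCoeff_neg_add_one (τ : ℂ) (n : ℕ) :
    (((-((n : ℤ) + 1) : ℤ) : ℂ) + 1 / 2) * thetaCoeff τ (-((n : ℤ) + 1)) =
      ((n : ℂ) + 1 / 2) * thetaCoeff τ n := by
  rw [thetaCoeff_neg_add_one]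
  push_cast
  ring

theorem summable_mul_thetaCoeff {τ : ℂ} (hτ : 0 < τ.im) :
    Summable fun n : ℤ => ((n : ℂ) + 1 / 2) * thetaCoeff τ n :=
  .of_nat_of_neg_add_one (summable_mul_thetaCoeff_nat hτ)
    ((summable_mul_thetaCoeff_nat hτ).congr fun n => (mul_thetaCoeff_neg_add_one τ n).symm)

theorem eta3_eq_tsum_nat {τ : ℂ} (hτ : 0 < τ.im) :
    eta3 τ = -2 * I * ∑' n : ℕ, ((n : ℂ) + 1 / 2) * thetaCoeff τ n := by
  have h := summable_mul_thetaCoeff_nat hτ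
  have hsum := tsum_of_nat_of_neg_add_one (f := fun n : ℤ => ((n : ℂ) + 1 / 2) * thetaCoeff τ n)
    h (h.congr fun n => (mul_thetaCoeff_neg_add_one τ n).symm)
  simp only [mul_thetaCoeff_neg_add_one] at hsum
  calc eta3 τ = -I * ∑' n : ℤ, ((n : ℂ) + 1 / 2) * thetaCoeff τ n := rfl
    _ = _ := by rw [hsum]; push_cast; ring

/-! ### Gaussians and Poisson summation over `ℤ + 1/2` -/

/-- The Gaussian `e(-x²τ/2)`; it is bounded for `Im τ ≤ 0` and solves `y' = -2πiτxy`. -/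
def gaussian (τ : ℂ) (x : ℝ) : ℂ := e (-(x : ℂ) ^ 2 * τ / 2)

theorem gaussian_eq_cexp (τ : ℂ) :
    gaussian τ = fun x : ℝ => Complex.exp (-(π : ℂ) * (I * τ) * (x : ℂ) ^ 2) := by
  funext x
  rw [gaussian, e]
  congr 1
  ring

theorem norm_gaussian (τ : ℂ) (x : ℝ) : ‖gaussian τ x‖ = Real.exp (π * τ.im * x ^ 2) := by
  have h : -(x : ℂ) ^ 2 * τ / 2 = ((-(x ^ 2 / 2) : ℝ) : ℂ) * τ := by
    push_cast
    ring
  rw [gaussian, norm_e, h, Complex.im_ofReal_mul]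
  congr 1
  ring

theorem gaussian_mul_gaussian (σ τ : ℂ) (x : ℝ) :
    gaussian σ x * gaussian τ x = gaussian (σ + τ) x := by
  rw [gaussian, gaussian, gaussian, ← e_add]
  congr 1
  ring

theorem gaussian_ne_zero (τ : ℂ) (x : ℝ) : gaussian τ x ≠ 0 := Complex.exp_ne_zero _

theorem contDiff_gaussian (τ : ℂ) : ContDiff ℝ ∞ (gaussian τ) := by
  rw [gaussian_eq_cexp]
  exact (contDiff_const.mul (Complex.ofRealCLM.contDiff.pow 2)).cexp

theorem continuous_gaussian (τ : ℂ) : Continuous (gaussian τ) := (contDiff_gaussian τ).continuous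

theorem hasDerivAt_gaussian (τ : ℂ) (x : ℝ) :
    HasDerivAt (gaussian τ) (-(2 * π * I * τ * x) * gaussian τ x) x := by
  have h := ((((Complex.ofRealCLM.hasDerivAt (x := x)).pow 2).const_mul
    (-(π : ℂ) * (I * τ)))).cexp
  rw [gaussian_eq_cexp]
  refine h.congr_deriv ?_
  simp only [Complex.ofRealCLM_apply, Pi.pow_apply]
  push_cast
  ring

theorem integrable_mul_gaussian {τ : ℂ} (hτ : τ.im < 0) :
    Integrable fun x : ℝ => (x : ℂ) * gaussian τ x := by
  have hb : 0 < -(π * τ.im) := neg_pos.2 (mul_neg_of_pos_of_neg Real.pi_pos hτ)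
  refine (integrable_mul_exp_neg_mul_sq hb).mono
    (Complex.continuous_ofReal.mul (continuous_gaussian τ)).aestronglyMeasurable
    (Eventually.of_forall fun x => ?_)
  rw [norm_mul, norm_mul, norm_gaussian, Complex.norm_real, neg_neg,
    Real.norm_of_nonneg (Real.exp_pos _).le]

theorem integrable_gaussian {τ : ℂ} (hτ : τ.im < 0) : Integrable (gaussian τ) := by
  have hb : 0 < -(π * τ.im) := neg_pos.2 (mul_neg_of_pos_of_neg Real.pi_pos hτ)
  refine (integrable_exp_neg_mul_sq hb).mono' (continuous_gaussian τ).aestronglyMeasurable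
    (Eventually.of_forall fun x => ?_)
  rw [norm_gaussian, neg_neg]

theorem isBigO_mul_gaussian {τ : ℂ} (hτ : τ.im < 0) :
    (fun x : ℝ => (x : ℂ) * gaussian τ x) =O[cocompact ℝ] fun x => |x| ^ (-2 : ℝ) := by
  have hre : (-(π : ℂ) * (I * τ)).re < 0 := by
    have := mul_neg_of_pos_of_neg Real.pi_pos hτ
    simpa using this
  have hgauss : gaussian τ =O[cocompact ℝ] fun x : ℝ => |x| ^ (-3 : ℝ) := by
    rw [gaussian_eq_cexp]
    simpa using (cexp_neg_quadratic_isLittleO_abs_rpow_cocompact hre 0 (-3)).isBigO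
  have hid : (fun x : ℝ => (x : ℂ)) =O[cocompact ℝ] fun x : ℝ => |x| :=
    .of_norm_le fun x => by simp
  refine (hid.mul hgauss).congr_right fun x => ?_
  rw [← Real.rpow_one_add' (abs_nonneg x) (by norm_num)]
  norm_num

/-- The square root `(-iτ)^{1/2}`, which is positive on the imaginary axis. -/
def sqrtNegI (τ : ℂ) : ℂ := (-I * τ) ^ (1 / 2 : ℂ)

theorem sqrtNegI_sq (τ : ℂ) : sqrtNegI τ ^ 2 = -I * τ := by
  rw [sqrtNegI, ← Complex.cpow_nat_mul]
  norm_num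

theorem sqrtNegI_ne_zero {τ : ℂ} (hτ : τ ≠ 0) : sqrtNegI τ ≠ 0 := by
  intro h
  have := sqrtNegI_sq τ
  simp_all [Complex.I_ne_zero]

theorem fourier_gaussian {τ : ℂ} (hτ : 0 < τ.im) :
    𝓕 (gaussian (-τ)) = fun t : ℝ => 1 / sqrtNegI τ * gaussian (1 / τ) t := by
  have hneg : gaussian (-τ) = fun x : ℝ => Complex.exp (-π * (-I * τ) * x ^ 2) := by
    rw [gaussian_eq_cexp]
    simp
  rw [hneg, fourier_gaussian_pi (by simpa using hτ), gaussian_eq_cexp]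
  funext t
  have hτ0 := ne_zero_of_im_pos hτ
  have harg : -π / (-I * τ) * (t : ℂ) ^ 2 = -π * (I * (1 / τ)) * t ^ 2 := by
    field_simp
    simp
  rw [harg, sqrtNegI]

/-- Multiplication by `x` is `(-2πi)⁻¹ d/dw` on the Fourier side, so this is the derivative of
`fourier_gaussian`. -/
theorem fourier_mul_gaussian {τ : ℂ} (hτ : 0 < τ.im) :
    𝓕 (fun x : ℝ => (x : ℂ) * gaussian (-τ) x) =
      fun t : ℝ => 1 / (τ * sqrtNegI τ) * ((t : ℂ) * gaussian (1 / τ) t) := by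
  funext w
  have hneg : (-τ).im < 0 := by simpa using hτ
  have hderiv := Real.hasDerivAt_fourier (integrable_gaussian hneg)
    (by simpa using integrable_mul_gaussian hneg) w
  rw [fourier_gaussian hτ] at hderiv
  have heq := hderiv.unique ((hasDerivAt_gaussian (1 / τ) w).const_mul _)
  simp only [smul_eq_mul, mul_assoc _ ((_ : ℝ) : ℂ)] at heq
  rw [fourier_const_mul] at heq
  refine mul_left_cancel₀ Complex.two_pi_I_ne_zero ?_
  linear_combination -heq

/-- The sample `e(m/2) f(m)` at the half-integer `m = n + 1/2`. -/
def halfIntSample (f : ℝ → ℂ) (n : ℤ) : ℂ := e (((n : ℂ) + 1 / 2) / 2) * f ((n : ℝ) + 1 / 2)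

theorem norm_halfIntSample (f : ℝ → ℂ) (n : ℤ) :
    ‖halfIntSample f n‖ = ‖f ((n : ℝ) + 1 / 2)‖ := by
  have h : ((n : ℂ) + 1 / 2) / 2 = ((((n : ℝ) + 1 / 2) / 2 : ℝ) : ℂ) := by push_cast; ring
  rw [halfIntSample, norm_mul, h, norm_e_ofReal, one_mul]

theorem halfIntSample_const_mul (c : ℂ) (f : ℝ → ℂ) (n : ℤ) :
    halfIntSample (fun x => c * f x) n = c * halfIntSample f n := by
  rw [halfIntSample, halfIntSample]
  ring

theorem halfIntSample_mul_gaussian (τ : ℂ) (n : ℤ) :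
    halfIntSample (fun x : ℝ => (x : ℂ) * gaussian (-τ) x) n =
      ((n : ℂ) + 1 / 2) * thetaCoeff τ n := by
  have h : ((n : ℂ) + 1 / 2) ^ 2 / 2 * τ + ((n : ℂ) + 1 / 2) / 2 =
      ((n : ℂ) + 1 / 2) / 2 + -(((n : ℝ) + 1 / 2 : ℝ) : ℂ) ^ 2 * -τ / 2 := by
    push_cast
    ring
  rw [halfIntSample, gaussian, thetaCoeff, h, e_add]
  push_cast
  ring

theorem isClosedEmbedding_intCast_add_half :
    Topology.IsClosedEmbedding fun n : ℤ => (n : ℝ) + 1 / 2 :=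
  (Homeomorph.addRight (1 / 2 : ℝ)).isClosedEmbedding.comp Int.isClosedEmbedding_coe_real

/-- The set `ℤ + 1/2`, away from which the series `∑ g_τ(Nn + x)` converges locally uniformly. -/
def halfIntegers : Set ℝ :=
  range fun n : ℤ => (n : ℝ) + 1 / 2

theorem isClosed_halfIntegers : IsClosed halfIntegers :=
  isClosedEmbedding_intCast_add_half.isClosed_range

theorem eventually_notMem_halfIntegers (x₀ : ℝ) : ∀ᶠ x in 𝓝[≠] x₀, x ∉ halfIntegers :=
  disjoint_principal_right.1 <| isClosed_and_discrete_iff.1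
    ⟨isClosed_halfIntegers, isClosedEmbedding_intCast_add_half.isDiscrete_range⟩ x₀

theorem summable_halfIntSample {f : ℝ → ℂ} {b : ℝ} (hb : 1 < b)
    (hf : f =O[cocompact ℝ] fun x => |x| ^ (-b)) : Summable (halfIntSample f) := by
  have hO := hf.comp_tendsto isClosedEmbedding_intCast_add_half.tendsto_cocompact
  rw [cocompact_eq_cofinite] at hO
  refine summable_of_isBigO ((Real.summable_one_div_int_add_rpow (1 / 2) b).2 hb)
    (hO.norm_left.congr (fun n => (norm_halfIntSample f n).symm) fun n => ?_).of_norm_left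
  simp [Real.rpow_neg (abs_nonneg _)]

/-- Twisting by the character `e(x/2)` shifts the Fourier transform by `1/2`, so Poisson summation
over `ℤ + 1/2` reproduces the same twisted sampling on the Fourier side. -/
theorem tsum_halfIntSample_eq {f : ℝ → ℂ} (hc : Continuous f) {b : ℝ} (hb : 1 < b)
    (hf : f =O[cocompact ℝ] fun x => |x| ^ (-b))
    (hsum : Summable (halfIntSample (𝓕 f))) :
    ∑' n, halfIntSample f n = I * ∑' n, halfIntSample (𝓕 f) n := by
  set F : ℝ → ℂ := fun x => e ((1 / 2 * x : ℝ) : ℂ) * f x with hF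
  have hFc : Continuous F := (continuous_e.comp (by fun_prop)).mul hc
  have hFO : F =O[cocompact ℝ] fun x => |x| ^ (-b) :=
    .of_norm_left (hf.norm_left.congr_left fun x => by rw [hF, norm_mul, norm_e_ofReal, one_mul])
  have hFF : 𝓕 F = fun w => 𝓕 f (w - 1 / 2) := funext (fourier_e_mul f (1 / 2))
  have hshift : ∀ n : ℤ, 𝓕 F ((n + 1 : ℤ) : ℝ) = 𝓕 f ((n : ℝ) + 1 / 2) := fun n => by
    rw [hFF]
    exact congrArg (𝓕 f) (by push_cast; ring)
  have hFsum : Summable fun n : ℤ => 𝓕 F n :=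
    (Equiv.addRight (1 : ℤ)).summable_iff.1 <| hsum.norm.of_norm_bounded fun n => by
      rw [norm_halfIntSample, ← hshift]
      rfl
  calc ∑' n, halfIntSample f n = ∑' n : ℤ, F (1 / 2 + n) := by
        refine tsum_congr fun n => ?_
        rw [halfIntSample, hF, add_comm (1 / 2 : ℝ)]
        congr 2
        push_cast
        ring
    _ = ∑' n : ℤ, 𝓕 F ((n + 1 : ℤ) : ℝ) * fourier (n + 1) ((1 / 2 : ℝ) : UnitAddCircle) := by
        rw [Real.tsum_eq_tsum_fourier_of_rpow_decay_of_summable hFc hb hFO hFsum,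
          ← (Equiv.addRight (1 : ℤ)).tsum_eq]
        rfl
    _ = _ := by
        rw [← tsum_mul_left]
        refine tsum_congr fun n => ?_
        rw [hshift, halfIntSample, ← mul_assoc, ← e_quarter, ← e_add, mul_comm,
          fourier_coe_eq_e]
        congr 3
        push_cast
        ring

/-! ### The cube of the eta function -/

theorem eta3_neg_one_div {τ : ℂ} (hτ : 0 < τ.im) :
    eta3 (-1 / τ) = -I * τ * sqrtNegI τ * eta3 τ := by
  have hτ0 := ne_zero_of_im_pos hτ
  have hrt := sqrtNegI_ne_zero hτ0
  have hσ := neg_one_div_im_pos hτ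
  have hneg : (-τ).im < 0 := by simpa using hτ
  have hF : halfIntSample (𝓕 fun x : ℝ => (x : ℂ) * gaussian (-τ) x) = fun n : ℤ =>
      1 / (τ * sqrtNegI τ) * (((n : ℂ) + 1 / 2) * thetaCoeff (-1 / τ) n) := by
    funext n
    rw [fourier_mul_gaussian hτ, halfIntSample_const_mul, ← halfIntSample_mul_gaussian,
      neg_div, neg_neg]
  have hpoisson := tsum_halfIntSample_eq (f := fun x : ℝ => (x : ℂ) * gaussian (-τ) x)
    (Complex.continuous_ofReal.mul (continuous_gaussian (-τ))) one_lt_two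
    (isBigO_mul_gaussian hneg) (hF ▸ (summable_mul_thetaCoeff hσ).mul_left _)
  rw [hF, tsum_mul_left, tsum_congr (halfIntSample_mul_gaussian τ)] at hpoisson
  change -I * ∑' n : ℤ, ((n : ℂ) + 1 / 2) * thetaCoeff (-1 / τ) n =
    -I * τ * sqrtNegI τ * (-I * ∑' n : ℤ, ((n : ℂ) + 1 / 2) * thetaCoeff τ n)
  have hcancel : τ * sqrtNegI τ * (1 / (τ * sqrtNegI τ)) = 1 :=
    mul_one_div_cancel (mul_ne_zero hτ0 hrt)
  rw [hpoisson]
  generalize ∑' n : ℤ, ((n : ℂ) + 1 / 2) * thetaCoeff (-1 / τ) n = S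
  linear_combination (-I ^ 3 * S) * hcancel + (-I * S) * I_mul_I

/-- The summand of Jacobi's series `e(-τ/8) η³(τ) = ∑ (-1)ⁿ (2n+1) q^{n(n+1)/2}`. -/
def jacobiTerm (τ : ℂ) (n : ℕ) : ℂ := (-1) ^ n * (2 * n + 1) * e ((n + 1).choose 2 * τ)

theorem mul_thetaCoeff_eq_jacobiTerm (τ : ℂ) (n : ℕ) :
    -2 * I * (((n : ℂ) + 1 / 2) * thetaCoeff τ n) = e (τ / 8) * jacobiTerm τ n := by
  have harg : (((n : ℤ) : ℂ) + 1 / 2) ^ 2 / 2 * τ + (((n : ℤ) : ℂ) + 1 / 2) / 2 =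
      1 / 4 + n / 2 + (τ / 8 + (n + 1).choose 2 * τ) := by
    rw [Nat.cast_choose_two]
    push_cast
    ring
  rw [thetaCoeff, harg, e_add, e_add, e_add, e_quarter, e_natCast_div_two, jacobiTerm]
  linear_combination (-2 * ((n : ℂ) + 1 / 2) * (-1) ^ n * e (τ / 8) * e ((n + 1).choose 2 * τ)) *
    I_mul_I

theorem eta3_eq_e_mul_tsum {τ : ℂ} (hτ : 0 < τ.im) :
    eta3 τ = e (τ / 8) * ∑' n, jacobiTerm τ n := by
  rw [eta3_eq_tsum_nat hτ, ← tsum_mul_left, ← tsum_mul_left]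
  exact tsum_congr (mul_thetaCoeff_eq_jacobiTerm τ)

theorem eta3_add_one {τ : ℂ} (hτ : 0 < τ.im) : eta3 (τ + 1) = e (1 / 8) * eta3 τ := by
  have hterm : ∀ n, jacobiTerm (τ + 1) n = jacobiTerm τ n := fun n => by
    have hint : e (((n + 1).choose 2 : ℕ) : ℂ) = 1 := by
      exact_mod_cast e_intCast ((n + 1).choose 2 : ℕ)
    rw [jacobiTerm, jacobiTerm, mul_add (((n + 1).choose 2 : ℕ) : ℂ), mul_one, e_add, hint, mul_one]
  rw [eta3_eq_e_mul_tsum (by simpa using hτ), eta3_eq_e_mul_tsum hτ, tsum_congr hterm,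
    add_div, e_add]
  ring

theorem norm_jacobiTerm (τ : ℂ) (n : ℕ) :
    ‖jacobiTerm τ n‖ = (2 * n + 1) * Real.exp (-(2 * π * ((n + 1).choose 2 * τ.im))) := by
  have him : ((n + 1).choose 2 * τ).im = (n + 1).choose 2 * τ.im := by
    simp
  have hcast : (2 * n + 1 : ℂ) = ((2 * n + 1 : ℝ) : ℂ) := by push_cast; ring
  rw [jacobiTerm, norm_mul, norm_mul, norm_e, him, hcast,
    Complex.norm_of_nonneg (by positivity)]
  simp

theorem norm_jacobiTerm_le {δ : ℝ} (hδ : 0 ≤ δ) {τ : ℂ} (hτ : δ ≤ τ.im) (n : ℕ) :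
    ‖jacobiTerm τ n‖ ≤ (2 * n + 1) * Real.exp (-(2 * π * δ) * n) := by
  have hchoose : (n : ℝ) ≤ (n + 1).choose 2 := by
    exact_mod_cast (Nat.choose_one_right n).symm.le.trans
      (by rw [Nat.choose_succ_succ' n 1]; exact Nat.le_add_right _ _)
  rw [norm_jacobiTerm, neg_mul, mul_assoc (2 * π), mul_comm δ]
  gcongr

theorem summable_jacobiTerm_bound {δ : ℝ} (hδ : 0 < δ) :
    Summable fun n : ℕ => (2 * n + 1) * Real.exp (-(2 * π * δ) * n) := by
  have hr : 0 < 2 * π * δ := by positivity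
  have h0 := Real.summable_pow_mul_exp_neg_nat_mul 0 hr
  have h1 := Real.summable_pow_mul_exp_neg_nat_mul 1 hr
  refine ((h1.mul_left 2).add h0).congr fun n => ?_
  ring

theorem differentiableOn_eta3 : DifferentiableOn ℂ eta3 {τ | 0 < τ.im} := by
  intro τ hτ
  have hδ : 0 < τ.im / 2 := half_pos hτ
  have hU : IsOpen {σ : ℂ | τ.im / 2 < σ.im} := isOpen_lt continuous_const Complex.continuous_im
  have hmem : {σ : ℂ | τ.im / 2 < σ.im} ∈ 𝓝 τ :=
    hU.mem_nhds (show τ.im / 2 < τ.im from half_lt_self hτ)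
  have hterm : ∀ n, Differentiable ℂ fun σ => jacobiTerm σ n := fun n =>
    (differentiable_e.comp (differentiable_id.const_mul _)).const_mul _
  have hsum : DifferentiableOn ℂ (fun σ => ∑' n, jacobiTerm σ n) {σ | τ.im / 2 < σ.im} :=
    Complex.differentiableOn_tsum_of_summable_norm (summable_jacobiTerm_bound hδ)
      (fun n => (hterm n).differentiableOn) hU
      fun n σ hσ => norm_jacobiTerm_le hδ.le (le_of_lt hσ) n
  have hexp : Differentiable ℂ fun σ : ℂ => e (σ / 8) :=
    differentiable_e.comp (differentiable_id.div_const 8)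
  have hprod := hexp.differentiableAt.mul (hsum.differentiableAt hmem)
  refine (hprod.congr_of_eventuallyEq ?_).differentiableWithinAt
  filter_upwards [hmem] with σ hσ
  exact eta3_eq_e_mul_tsum (hδ.trans hσ)

theorem tendsto_tsum_jacobiTerm :
    Tendsto (fun z : UpperHalfPlane => ∑' n, jacobiTerm z n) UpperHalfPlane.atImInfty (𝓝 1) := by
  have him : Tendsto UpperHalfPlane.im UpperHalfPlane.atImInfty atTop := tendsto_comap
  have hterm : ∀ n : ℕ, Tendsto (fun z : UpperHalfPlane => jacobiTerm z n)
      UpperHalfPlane.atImInfty (𝓝 (if n = 0 then 1 else 0)) := by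
    intro n
    split_ifs with hn
    · simp [hn, jacobiTerm, e]
    have hpos : 0 < 2 * π * ((n + 1).choose 2 : ℝ) := by
      have := Nat.choose_pos (n := n + 1) (k := 2) (by lia)
      positivity
    rw [tendsto_zero_iff_norm_tendsto_zero]
    have hexp := (Real.tendsto_exp_neg_atTop_nhds_zero.comp
      (him.const_mul_atTop hpos)).const_mul (2 * (n : ℝ) + 1)
    rw [mul_zero] at hexp
    refine hexp.congr fun z => ?_
    rw [norm_jacobiTerm, Function.comp_apply, mul_assoc (2 * π), UpperHalfPlane.coe_im]
  have hbound : ∀ᶠ z : UpperHalfPlane in UpperHalfPlane.atImInfty, ∀ n,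
      ‖jacobiTerm z n‖ ≤ (2 * n + 1) * Real.exp (-(2 * π * 1) * n) :=
    (him.eventually_ge_atTop 1).mono fun z hz => norm_jacobiTerm_le zero_le_one hz
  have hlim :=
    tendsto_tsum_of_dominated_convergence (summable_jacobiTerm_bound one_pos) hterm hbound
  rwa [tsum_ite_eq] at hlim

theorem tendsto_eta3_atImInfty :
    Tendsto (fun z : UpperHalfPlane => eta3 z) UpperHalfPlane.atImInfty (𝓝 0) := by
  have him : Tendsto UpperHalfPlane.im UpperHalfPlane.atImInfty atTop := tendsto_comap
  have hexp : Tendsto (fun z : UpperHalfPlane => e (z / 8)) UpperHalfPlane.atImInfty (𝓝 0) := by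
    rw [tendsto_zero_iff_norm_tendsto_zero]
    refine (Real.tendsto_exp_neg_atTop_nhds_zero.comp
      (him.const_mul_atTop (show 0 < π / 4 by positivity))).congr fun z => ?_
    have him8 : ((z : ℂ) / 8).im = z.im / 8 := by simp
    rw [norm_e, him8, Function.comp_apply]
    congr 1
    ring
  have hmul := hexp.mul tendsto_tsum_jacobiTerm
  rw [zero_mul] at hmul
  exact hmul.congr fun z => (eta3_eq_e_mul_tsum z.im_pos).symm

section

open scoped ModularForm MatrixGroups

theorem eta3_pow_eight_slash_T :
    (fun z : UpperHalfPlane => eta3 z ^ 8) ∣[(12 : ℤ)] ModularGroup.T =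
      fun z : UpperHalfPlane => eta3 z ^ 8 := by
  funext z
  have hroot : e (1 / 8) ^ 8 = 1 := by
    rw [e, ← Complex.exp_nat_mul]
    exact Complex.exp_eq_one_iff.2 ⟨1, by push_cast; ring⟩
  have hT : ((ModularGroup.T • z : UpperHalfPlane) : ℂ) = z + 1 := by
    rw [UpperHalfPlane.modular_T_smul, UpperHalfPlane.coe_vadd]
    push_cast
    ring
  have hdenom : UpperHalfPlane.denom (ModularGroup.T : GL (Fin 2) ℝ) z = 1 := by
    rw [ModularGroup.denom_apply]
    simp [ModularGroup.T]
  rw [ModularForm.SL_slash_apply, hT, eta3_add_one z.im_pos, mul_pow, hroot, hdenom]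
  simp

theorem eta3_pow_eight_slash_S :
    (fun z : UpperHalfPlane => eta3 z ^ 8) ∣[(12 : ℤ)] ModularGroup.S =
      fun z : UpperHalfPlane => eta3 z ^ 8 := by
  funext z
  have hfactor : (-I * z * sqrtNegI z) ^ 8 = (z : ℂ) ^ 12 := by
    calc (-I * z * sqrtNegI z) ^ 8 = (I ^ 4) ^ 2 * z ^ 8 * (sqrtNegI z ^ 2) ^ 4 := by ring
      _ = (I ^ 4) ^ 3 * (z : ℂ) ^ 12 := by rw [sqrtNegI_sq]; ring
      _ = (z : ℂ) ^ 12 := by rw [I_pow_four]; ring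
  have hS : ((ModularGroup.S • z : UpperHalfPlane) : ℂ) = -1 / z := by
    rw [UpperHalfPlane.modular_S_smul]
    simp [neg_div]
  rw [ModularForm.SL_slash_apply, hS, eta3_neg_one_div z.im_pos, mul_pow, hfactor,
    ModularGroup.denom_S, mul_right_comm, ← zpow_natCast, ← zpow_add₀ z.ne_zero]
  simp

/-- `(η³)⁸` as a cusp form of weight `12` and level one. -/
def eta3PowEight : CuspForm 𝒮ℒ 12 where
  toFun z := eta3 z ^ 8
  slash_action_eq' := by
    rintro _ ⟨γ, rfl⟩
    exact SlashInvariantForm.slash_action_generators_SL2Z eta3_pow_eight_slash_S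
      eta3_pow_eight_slash_T γ
  holo' := by
    rw [UpperHalfPlane.mdifferentiable_iff]
    refine (differentiableOn_eta3.pow 8).congr fun z hz => ?_
    simp [UpperHalfPlane.ofComplex_apply_of_im_pos hz]
  zero_at_cusps' hc := by
    rw [Subgroup.IsArithmetic.isCusp_iff_isCusp_SL2Z] at hc
    rw [OnePoint.isZeroAt_iff_forall_SL2Z hc]
    intro γ _
    rw [SlashInvariantForm.slash_action_generators_SL2Z eta3_pow_eight_slash_S
      eta3_pow_eight_slash_T]
    have hpow := tendsto_eta3_atImInfty.pow 8
    rw [zero_pow (by norm_num)] at hpow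
    exact hpow

/-- Up to a scalar, `(η³)⁸` is the discriminant, which has no zeros on the upper half plane; the
scalar is nonzero because Jacobi's series tends to `1` at `i∞`. -/
theorem eta3_ne_zero {τ : ℂ} (hτ : 0 < τ.im) : eta3 τ ≠ 0 := by
  obtain ⟨c, hc⟩ := CuspForm.exists_smul_discriminant_of_weight_eq_twelve eta3PowEight
  have happly : ∀ z : UpperHalfPlane, eta3 z ^ 8 = c * ModularForm.discriminant z := fun z => by
    rw [← CuspForm.coe_discriminant, ← smul_eq_mul, ← smul_apply, hc]
    rfl
  have hc0 : c ≠ 0 := by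
    rintro rfl
    obtain ⟨z, hz⟩ := (tendsto_tsum_jacobiTerm.eventually_ne one_ne_zero).exists
    have hzero := happly z
    rw [zero_mul, eta3_eq_e_mul_tsum z.im_pos] at hzero
    exact mul_ne_zero (Complex.exp_ne_zero _) hz (pow_eq_zero_iff (by norm_num) |>.1 hzero)
  intro h
  have hzero := happly ⟨τ, hτ⟩
  rw [show ((⟨τ, hτ⟩ : UpperHalfPlane) : ℂ) = τ from rfl, h, zero_pow (by norm_num)] at hzero
  exact mul_ne_zero hc0 (ModularForm.discriminant_ne_zero _) hzero.symm

end

/-! ### The function `g_τ` -/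

theorem integrable_exp_neg_sq : Integrable fun t : ℝ => Real.exp (-t ^ 2) := by
  simpa using integrable_exp_neg_mul_sq one_pos

theorem two_div_sqrt_pi_mul_integral_Ioi_zero :
    2 / √π * ∫ t in Ioi (0 : ℝ), Real.exp (-t ^ 2) = 1 := by
  have h : ∫ t in Ioi (0 : ℝ), Real.exp (-t ^ 2) = √π / 2 := by simpa using integral_gaussian_Ioi 1
  have hπ : √π ≠ 0 := (Real.sqrt_pos.2 Real.pi_pos).ne'
  rw [h]
  field_simp

theorem erfc_zero : erfc 0 = 1 := two_div_sqrt_pi_mul_integral_Ioi_zero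

theorem erfc_nonneg (x : ℝ) : 0 ≤ erfc x :=
  mul_nonneg (by positivity) (integral_nonneg fun _ => (Real.exp_pos _).le)

theorem erfc_le_exp_neg_sq {x : ℝ} (hx : 0 ≤ x) : erfc x ≤ Real.exp (-x ^ 2) := by
  have hshift : ∫ t in Ioi x, Real.exp (-t ^ 2) = ∫ s in Ioi (0 : ℝ), Real.exp (-(s + x) ^ 2) := by
    have h := (measurePreserving_add_right volume x).setIntegral_preimage_emb
      (measurableEmbedding_addRight x) (fun t : ℝ => Real.exp (-t ^ 2)) (Ioi x)
    rw [← h, preimage_add_const_Ioi, sub_self]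
  have hle : ∫ t in Ioi x, Real.exp (-t ^ 2) ≤
      Real.exp (-x ^ 2) * ∫ s in Ioi (0 : ℝ), Real.exp (-s ^ 2) := by
    rw [hshift, ← integral_const_mul]
    refine setIntegral_mono_on (integrable_exp_neg_sq.comp_add_right x).integrableOn
      (integrable_exp_neg_sq.const_mul _).integrableOn measurableSet_Ioi fun s hs => ?_
    rw [← Real.exp_add, Real.exp_le_exp]
    nlinarith [mul_nonneg hx (le_of_lt (show 0 < s from hs))]
  calc erfc x ≤ 2 / √π * (Real.exp (-x ^ 2) * ∫ s in Ioi (0 : ℝ), Real.exp (-s ^ 2)) :=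
        mul_le_mul_of_nonneg_left hle (by positivity)
    _ = Real.exp (-x ^ 2) := by
        rw [mul_left_comm, two_div_sqrt_pi_mul_integral_Ioi_zero, mul_one]

theorem hasDerivAt_erfc (x : ℝ) : HasDerivAt erfc (-(2 / √π) * Real.exp (-x ^ 2)) x := by
  have herfc : erfc = fun y => 2 / √π *
      ((∫ t in Ioi (0 : ℝ), Real.exp (-t ^ 2)) - ∫ t in (0 : ℝ)..y, Real.exp (-t ^ 2)) := by
    funext y
    rw [← intervalIntegral.integral_interval_add_Ioi integrable_exp_neg_sq.integrableOn
      (integrable_exp_neg_sq.integrableOn (s := Ioi y)), add_sub_cancel_left, erfc]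
  have hcont : Continuous fun t : ℝ => Real.exp (-t ^ 2) := by fun_prop
  rw [herfc]
  refine ((hcont.integral_hasStrictDerivAt 0 x).hasDerivAt.const_sub _).const_mul _
    |>.congr_deriv ?_
  ring

/-- The factor `erfc(√(2πv) s) / 2` of `g*_τ(x)` as a function of `s = |x|`. -/
def erfcTail (v s : ℝ) : ℝ := erfc (√(2 * π * v) * s) / 2

theorem erfcTail_zero (v : ℝ) : erfcTail v 0 = 1 / 2 := by
  rw [erfcTail, mul_zero, erfc_zero]

theorem erfcTail_nonneg (v s : ℝ) : 0 ≤ erfcTail v s := div_nonneg (erfc_nonneg _) zero_le_two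

theorem erfcTail_le {v : ℝ} (hv : 0 ≤ v) {s : ℝ} (hs : 0 ≤ s) :
    erfcTail v s ≤ Real.exp (-(2 * π * v * s ^ 2)) := by
  have h := erfc_le_exp_neg_sq (mul_nonneg (Real.sqrt_nonneg (2 * π * v)) hs)
  rw [mul_pow, Real.sq_sqrt (by positivity)] at h
  exact (half_le_self (erfc_nonneg _)).trans h

theorem hasDerivAt_erfcTail {v : ℝ} (hv : 0 ≤ v) (s : ℝ) :
    HasDerivAt (erfcTail v) (-√(2 * v) * Real.exp (-(2 * π * v * s ^ 2))) s := by
  have hlin : HasDerivAt (fun s => √(2 * π * v) * s) (√(2 * π * v)) s := by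
    simpa using (hasDerivAt_id s).const_mul √(2 * π * v)
  refine (((hasDerivAt_erfc _).comp s hlin).div_const 2).congr_deriv ?_
  have hsqrt : √(2 * π * v) = √(2 * v) * √π := by
    rw [← Real.sqrt_mul (by positivity), mul_right_comm]
  have hπ : √π ≠ 0 := (Real.sqrt_pos.2 Real.pi_pos).ne'
  rw [mul_pow, Real.sq_sqrt (by positivity), hsqrt]
  field_simp

theorem continuous_erfcTail {v : ℝ} (hv : 0 ≤ v) : Continuous (erfcTail v) :=
  continuous_iff_continuousAt.2 fun s => (hasDerivAt_erfcTail hv s).continuousAt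

theorem measurable_sign : Measurable Real.sign :=
  measurable_const.ite measurableSet_Iio (measurable_const.ite measurableSet_Ioi measurable_const)

theorem norm_sign_le_one (x : ℝ) : ‖(Real.sign x : ℂ)‖ ≤ 1 := by
  rcases Real.sign_apply_eq x with h | h | h <;> simp [h]

theorem gstar_eq (τ : ℂ) (x : ℝ) :
    gstar τ x = gaussian τ x * (Real.sign x * erfcTail τ.im |x|) := by
  rw [gstar, gaussian, erfcTail]
  push_cast
  ring

theorem norm_gstar_le {τ : ℂ} (hτ : 0 ≤ τ.im) (x : ℝ) :
    ‖gstar τ x‖ ≤ Real.exp (-(π * τ.im) * x ^ 2) := by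
  rw [gstar_eq, norm_mul, norm_mul, norm_gaussian, Complex.norm_of_nonneg (erfcTail_nonneg _ _)]
  calc Real.exp (π * τ.im * x ^ 2) * (‖(Real.sign x : ℂ)‖ * erfcTail τ.im |x|)
      ≤ Real.exp (π * τ.im * x ^ 2) * (1 * Real.exp (-(2 * π * τ.im * |x| ^ 2))) := by
        gcongr
        · exact erfcTail_nonneg _ _
        · exact norm_sign_le_one x
        · exact erfcTail_le hτ (abs_nonneg x)
    _ = Real.exp (-(π * τ.im) * x ^ 2) := by
        rw [one_mul, ← Real.exp_add, sq_abs]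
        congr 1
        ring

theorem integrable_gstar {τ : ℂ} (hτ : 0 < τ.im) : Integrable (gstar τ) := by
  have hmeas : Measurable (gstar τ) := by
    rw [funext (gstar_eq τ)]
    exact (continuous_gaussian τ).measurable.mul
      ((Complex.measurable_ofReal.comp measurable_sign).mul (Complex.measurable_ofReal.comp
        ((continuous_erfcTail hτ.le).comp continuous_abs).measurable))
  exact (integrable_exp_neg_mul_sq (b := π * τ.im) (by positivity)).mono'
    hmeas.aestronglyMeasurable (.of_forall (norm_gstar_le hτ.le))

/-- The odd function equal to `M - x` on `(0, M)` and vanishing for `|x| ≥ M`. -/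
def oddTent (M x : ℝ) : ℝ := Real.sign x * max (M - |x|) 0

/-- The summand of index `m = n + 1/2` of `iη³(τ) g⁺_τ(x)`. -/
def gplusTerm (τ : ℂ) (n : ℕ) (x : ℝ) : ℂ :=
  thetaCoeff τ n * (gaussian τ x * oddTent (n + 1 / 2) x)

theorem tsum_int_ite_eq_tsum_nat (τ : ℂ) (x : ℝ) :
    (∑' m : ℤ, if |x| < (m : ℝ) + 1 / 2 then
      (((m : ℝ) + 1 / 2 - |x| : ℝ) : ℂ) * thetaCoeff τ m else 0) =
      ∑' n : ℕ, ((max ((n : ℝ) + 1 / 2 - |x|) 0 : ℝ) : ℂ) * thetaCoeff τ n := by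
  rw [← Function.Injective.tsum_eq (g := ((↑) : ℕ → ℤ)) Nat.cast_injective]
  · refine tsum_congr fun n => ?_
    rw [Int.cast_natCast]
    split_ifs with h
    · rw [max_eq_left (by linarith)]
    · rw [max_eq_right (by linarith), Complex.ofReal_zero, zero_mul]
  · intro m hm
    have hlt : |x| < (m : ℝ) + 1 / 2 := by
      by_contra h
      exact hm (if_neg h)
    have hneg : (-1 : ℝ) < m := by linarith [abs_nonneg x]
    have hneg' : -1 < m := by exact_mod_cast hneg
    exact ⟨m.toNat, Int.toNat_of_nonneg (by lia)⟩

/-- The profile of `g_τ` on the positive half line: `g_τ(x) = e(-x²τ/2) sgn(x) gProfile τ |x|`. -/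
def gProfile (τ : ℂ) (s : ℝ) : ℂ :=
  1 / (I * eta3 τ) * ∑' n : ℕ, ((max ((n : ℝ) + 1 / 2 - s) 0 : ℝ) : ℂ) * thetaCoeff τ n -
    erfcTail τ.im s

theorem gfun_eq_gProfile (τ : ℂ) (x : ℝ) :
    gfun τ x = gaussian τ x * (Real.sign x * gProfile τ |x|) := by
  rw [gfun, gstar_eq, gProfile, ← tsum_int_ite_eq_tsum_nat]
  change gaussian τ x * (Real.sign x / (I * eta3 τ)) * _ - _ = _
  simp only [thetaCoeff]
  ring

theorem gfun_eq_tsum_gplusTerm (τ : ℂ) (x : ℝ) :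
    gfun τ x = 1 / (I * eta3 τ) * ∑' n, gplusTerm τ n x - gstar τ x := by
  have hterm : ∀ n, gplusTerm τ n x = gaussian τ x * Real.sign x *
      (((max ((n : ℝ) + 1 / 2 - |x|) 0 : ℝ) : ℂ) * thetaCoeff τ n) := fun n => by
    rw [gplusTerm, oddTent]
    push_cast
    ring
  rw [gfun_eq_gProfile, gstar_eq, gProfile, tsum_congr hterm, tsum_mul_left]
  ring

theorem norm_max_mul_thetaCoeff_le (τ : ℂ) (n : ℕ) {s : ℝ} (hs : 0 ≤ s) :
    ‖((max ((n : ℝ) + 1 / 2 - s) 0 : ℝ) : ℂ) * thetaCoeff τ n‖ ≤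
      ((n : ℝ) + 1 / 2) ^ 1 * ‖thetaCoeff τ n‖ := by
  rw [norm_mul, Complex.norm_of_nonneg (le_max_right _ _), pow_one]
  gcongr
  exact max_le (by linarith) (by positivity)

theorem continuous_gProfile_abs {τ : ℂ} (hτ : 0 < τ.im) : Continuous fun x => gProfile τ |x| := by
  refine .sub (continuous_const.mul ?_)
    (Complex.continuous_ofReal.comp ((continuous_erfcTail hτ.le).comp continuous_abs))
  exact continuous_tsum (fun n => by fun_prop) (summable_pow_mul_norm_thetaCoeff hτ 1)
    fun n x => norm_max_mul_thetaCoeff_le τ n (abs_nonneg x)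

theorem gProfile_zero {τ : ℂ} (hτ : 0 < τ.im) : gProfile τ 0 = 0 := by
  have hsum : ∑' n : ℕ, ((max ((n : ℝ) + 1 / 2 - 0) 0 : ℝ) : ℂ) * thetaCoeff τ n =
      I * eta3 τ / 2 := by
    have hmax : ∀ n : ℕ, max ((n : ℝ) + 1 / 2 - 0) 0 = n + 1 / 2 := fun n => by
      rw [sub_zero, max_eq_left (by positivity)]
    simp only [hmax]
    push_cast
    rw [eta3_eq_tsum_nat hτ]
    linear_combination (∑' n : ℕ, ((n : ℂ) + 1 / 2) * thetaCoeff τ n) * I_mul_I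
  have hη : I * eta3 τ ≠ 0 := mul_ne_zero I_ne_zero (eta3_ne_zero hτ)
  rw [gProfile, hsum, erfcTail_zero, one_div, ← mul_div_assoc, inv_mul_cancel₀ hη]
  push_cast
  ring

theorem continuous_sign_mul {f : ℝ → ℂ} (hf : Continuous f) (h0 : f 0 = 0) :
    Continuous fun x : ℝ => (Real.sign x : ℂ) * f x := by
  have hite : (fun x : ℝ => (Real.sign x : ℂ) * f x) = fun x => if 0 ≤ x then f x else -f x := by
    funext x
    split_ifs with hx
    · rcases hx.eq_or_lt with rfl | hx
      · rw [h0, mul_zero]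
      · rw [Real.sign_of_pos hx, Complex.ofReal_one, one_mul]
    · simp [Real.sign_of_neg (not_le.1 hx)]
  rw [hite]
  refine hf.if_le hf.neg continuous_const continuous_id fun x hx => ?_
  rw [← hx, h0, neg_zero]

theorem continuous_gfun {τ : ℂ} (hτ : 0 < τ.im) : Continuous (gfun τ) := by
  rw [funext (gfun_eq_gProfile τ)]
  exact (continuous_gaussian τ).mul
    (continuous_sign_mul (continuous_gProfile_abs hτ) (by rw [abs_zero, gProfile_zero hτ]))

theorem tendsto_gProfile_atTop {τ : ℂ} (hτ : 0 < τ.im) : Tendsto (gProfile τ) atTop (𝓝 0) := by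
  have hterm : ∀ n : ℕ, Tendsto
      (fun s : ℝ => ((max ((n : ℝ) + 1 / 2 - s) 0 : ℝ) : ℂ) * thetaCoeff τ n) atTop (𝓝 0) :=
    fun n => tendsto_const_nhds.congr' <| by
      filter_upwards [eventually_ge_atTop ((n : ℝ) + 1 / 2)] with s hs
      rw [max_eq_right (sub_nonpos.2 hs), Complex.ofReal_zero, zero_mul]
  have hsum := tendsto_tsum_of_dominated_convergence (summable_pow_mul_norm_thetaCoeff hτ 1) hterm
    ((eventually_ge_atTop 0).mono fun s hs n => norm_max_mul_thetaCoeff_le τ n hs)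
  have hexp : Tendsto (fun s : ℝ => Real.exp (-(2 * π * τ.im * s ^ 2))) atTop (𝓝 0) :=
    Real.tendsto_exp_neg_atTop_nhds_zero.comp
      ((tendsto_pow_atTop two_ne_zero).const_mul_atTop (by positivity))
  have htail : Tendsto (erfcTail τ.im) atTop (𝓝 0) :=
    squeeze_zero' (.of_forall (erfcTail_nonneg τ.im))
      ((eventually_ge_atTop 0).mono fun s hs => erfcTail_le hτ.le hs) hexp
  have hlim := (hsum.const_mul (1 / (I * eta3 τ))).sub
    ((Complex.continuous_ofReal.tendsto 0).comp htail)
  rwa [tsum_zero, mul_zero, Complex.ofReal_zero, sub_zero] at hlim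

theorem norm_gplusTerm_le (τ : ℂ) (n : ℕ) (x : ℝ) :
    ‖gplusTerm τ n x‖ ≤ max ((n : ℝ) + 1 / 2 - |x|) 0 *
      Real.exp (-(π * τ.im * (((n : ℝ) + 1 / 2 - |x|) * ((n : ℝ) + 1 / 2 + |x|)))) := by
  have hexp : Real.exp (-(π * τ.im * (((n : ℝ) + 1 / 2 - |x|) * ((n : ℝ) + 1 / 2 + |x|)))) =
      ‖thetaCoeff τ n‖ * ‖gaussian τ x‖ := by
    rw [norm_thetaCoeff, norm_gaussian, ← Real.exp_add, Int.cast_natCast]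
    congr 1
    linear_combination (π * τ.im) * sq_abs x
  rw [gplusTerm, oddTent, Complex.ofReal_mul, norm_mul, norm_mul, norm_mul,
    Complex.norm_of_nonneg (le_max_right _ _), hexp]
  calc ‖thetaCoeff τ n‖ * (‖gaussian τ x‖ * (‖(Real.sign x : ℂ)‖ * max ((n : ℝ) + 1 / 2 - |x|) 0))
      ≤ ‖thetaCoeff τ n‖ * (‖gaussian τ x‖ * (1 * max ((n : ℝ) + 1 / 2 - |x|) 0)) := by
        gcongr
        exact norm_sign_le_one x
    _ = _ := by ring

theorem mul_exp_neg_le {x : ℝ} (hx : 0 ≤ x) : x * Real.exp (-x) ≤ 7 * (1 + x ^ 2)⁻¹ := by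
  have h1 : x * Real.exp (-x) ≤ 1 := by
    rw [Real.exp_neg, ← div_eq_mul_inv, div_le_one (Real.exp_pos x)]
    linarith [Real.add_one_le_exp x]
  have h3 : x ^ 3 * Real.exp (-x) ≤ 6 := by
    have h := Real.pow_div_factorial_le_exp x hx 3
    rw [div_le_iff₀ (by positivity)] at h
    rw [Real.exp_neg, ← div_eq_mul_inv, div_le_iff₀ (Real.exp_pos x)]
    simpa [Nat.factorial, mul_comm] using h
  rw [← div_eq_mul_inv, le_div_iff₀ (by positivity)]
  linarith

theorem norm_gplusTerm_le_inv_one_add_sq {τ : ℂ} (hτ : 0 < τ.im) (n : ℕ) (x : ℝ) :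
    ‖gplusTerm τ n x‖ ≤ 7 / (π * τ.im * (n + 1 / 2)) *
      ((1 + (π * τ.im * (n + 1 / 2) * (x - (n + 1 / 2))) ^ 2)⁻¹ +
        (1 + (π * τ.im * (n + 1 / 2) * (x + (n + 1 / 2))) ^ 2)⁻¹) := by
  refine (norm_gplusTerm_le τ n x).trans ?_
  set M : ℝ := n + 1 / 2
  set a : ℝ := π * τ.im * M with ha
  have ha0 : 0 < a := by positivity
  rcases le_total M |x| with hx | hx
  · rw [max_eq_right (sub_nonpos.2 hx), zero_mul]
    positivity
  rw [max_eq_left (sub_nonneg.2 hx)]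
  have hexp : a * (M - |x|) ≤ π * τ.im * ((M - |x|) * (M + |x|)) := by
    have := mul_nonneg (by positivity : 0 ≤ π * τ.im)
      (mul_nonneg (sub_nonneg.2 hx) (abs_nonneg x))
    rw [ha]
    linarith
  have hu : 0 ≤ a * (M - |x|) := mul_nonneg ha0.le (sub_nonneg.2 hx)
  calc (M - |x|) * Real.exp (-(π * τ.im * ((M - |x|) * (M + |x|))))
      ≤ (M - |x|) * Real.exp (-(a * (M - |x|))) := by
        gcongr
    _ = 1 / a * (a * (M - |x|) * Real.exp (-(a * (M - |x|)))) := by field_simp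
    _ ≤ 1 / a * (7 * (1 + (a * (M - |x|)) ^ 2)⁻¹) :=
        mul_le_mul_of_nonneg_left (mul_exp_neg_le hu) (by positivity)
    _ = 7 / a * (1 + (a * (M - |x|)) ^ 2)⁻¹ := by ring
    _ ≤ 7 / a * ((1 + (a * (x - M)) ^ 2)⁻¹ + (1 + (a * (x + M)) ^ 2)⁻¹) := by
        gcongr
        rcases abs_cases x with ⟨h, -⟩ | ⟨h, -⟩
        · rw [h, ← neg_sub x M, mul_neg, neg_sq]
          exact le_add_of_nonneg_right (by positivity)
        · rw [h, sub_neg_eq_add, add_comm M]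
          exact le_add_of_nonneg_left (by positivity)

theorem integrable_inv_one_add_mul_sub_sq {a : ℝ} (ha : a ≠ 0) (b : ℝ) :
    Integrable fun x : ℝ => (1 + (a * (x - b)) ^ 2)⁻¹ :=
  (integrable_inv_one_add_sq.comp_mul_left' ha).comp_sub_right b

theorem integral_inv_one_add_mul_sub_sq {a : ℝ} (ha : 0 < a) (b : ℝ) :
    ∫ x : ℝ, (1 + (a * (x - b)) ^ 2)⁻¹ = π / a := by
  rw [integral_sub_right_eq_self (fun x : ℝ => (1 + (a * x) ^ 2)⁻¹),
    Measure.integral_comp_mul_left (fun x : ℝ => (1 + x ^ 2)⁻¹), integral_univ_inv_one_add_sq,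
    abs_of_pos (inv_pos.2 ha), smul_eq_mul, mul_comm, div_eq_mul_inv]

theorem measurable_gplusTerm (τ : ℂ) (n : ℕ) : Measurable (gplusTerm τ n) := by
  have htent : Measurable (oddTent ((n : ℝ) + 1 / 2)) :=
    measurable_sign.mul (by fun_prop)
  exact ((continuous_gaussian τ).measurable.mul
    (Complex.measurable_ofReal.comp htent)).const_mul _

theorem integrable_gplusTerm {τ : ℂ} (hτ : 0 < τ.im) (n : ℕ) : Integrable (gplusTerm τ n) := by
  have ha : π * τ.im * ((n : ℝ) + 1 / 2) ≠ 0 := by positivity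
  have hadd := integrable_inv_one_add_mul_sub_sq ha (-((n : ℝ) + 1 / 2))
  simp only [sub_neg_eq_add] at hadd
  exact (((integrable_inv_one_add_mul_sub_sq ha _).add hadd).const_mul _).mono'
    (measurable_gplusTerm τ n).aestronglyMeasurable
    (.of_forall (norm_gplusTerm_le_inv_one_add_sq hτ n))

theorem integral_norm_gplusTerm_le {τ : ℂ} (hτ : 0 < τ.im) (n : ℕ) :
    ∫ x, ‖gplusTerm τ n x‖ ≤ 14 / (π * τ.im ^ 2) * (1 / |(n : ℝ) + 1 / 2| ^ (2 : ℝ)) := by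
  have ha : 0 < π * τ.im * ((n : ℝ) + 1 / 2) := by positivity
  have hsub := integrable_inv_one_add_mul_sub_sq ha.ne' ((n : ℝ) + 1 / 2)
  have hadd := integrable_inv_one_add_mul_sub_sq ha.ne' (-((n : ℝ) + 1 / 2))
  have hint := integral_inv_one_add_mul_sub_sq ha (-((n : ℝ) + 1 / 2))
  simp only [sub_neg_eq_add] at hadd hint
  refine (integral_mono (integrable_gplusTerm hτ n).norm ((hsub.add hadd).const_mul _)
    (norm_gplusTerm_le_inv_one_add_sq hτ n)).trans_eq ?_
  simp only [Pi.add_apply]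
  rw [integral_const_mul, integral_add hsub hadd, hint, integral_inv_one_add_mul_sub_sq ha,
    Real.rpow_two, sq_abs]
  field_simp
  ring

theorem summable_integral_norm_gplusTerm {τ : ℂ} (hτ : 0 < τ.im) :
    Summable fun n => ∫ x, ‖gplusTerm τ n x‖ :=
  (((Real.summable_one_div_nat_add_rpow (1 / 2) 2).2 one_lt_two).mul_left _).of_nonneg_of_le
    (fun _ => integral_nonneg fun _ => norm_nonneg _) (integral_norm_gplusTerm_le hτ)

theorem integrable_tsum_of_summable_integral_norm {α ι E : Type*} [MeasurableSpace α]
    {μ : Measure α} [Countable ι] [NormedAddCommGroup E] {F : ι → α → E}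
    (hmeas : AEStronglyMeasurable (fun x => ∑' i, F i x) μ) (hint : ∀ i, Integrable (F i) μ)
    (hsum : Summable fun i => ∫ x, ‖F i x‖ ∂μ) : Integrable (fun x => ∑' i, F i x) μ := by
  refine ⟨hmeas, hasFiniteIntegral_iff_enorm.2 ?_⟩
  calc ∫⁻ x, ‖∑' i, F i x‖ₑ ∂μ ≤ ∫⁻ x, ∑' i, ‖F i x‖ₑ ∂μ :=
        lintegral_mono fun x => enorm_tsum_le_tsum_enorm
    _ = ∑' i, ∫⁻ x, ‖F i x‖ₑ ∂μ := lintegral_tsum fun i => (hint i).1.enorm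
    _ = ∑' i, ENNReal.ofReal (∫ x, ‖F i x‖ ∂μ) :=
        tsum_congr fun i => (ofReal_integral_norm_eq_lintegral_enorm (hint i)).symm
    _ < ⊤ := hsum.tsum_ofReal_lt_top

theorem integrable_tsum_gplusTerm {τ : ℂ} (hτ : 0 < τ.im) :
    Integrable fun x => ∑' n, gplusTerm τ n x :=
  integrable_tsum_of_summable_integral_norm
    (Measurable.tsum fun n => measurable_gplusTerm τ n).aestronglyMeasurable
    (integrable_gplusTerm hτ) (summable_integral_norm_gplusTerm hτ)

theorem integrable_gfun {τ : ℂ} (hτ : 0 < τ.im) : Integrable (gfun τ) := by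
  rw [funext (gfun_eq_tsum_gplusTerm τ)]
  exact ((integrable_tsum_gplusTerm hτ).const_mul _).sub (integrable_gstar hτ)

theorem integral_gfun_mul {τ : ℂ} (hτ : 0 < τ.im) {B : ℝ → ℂ} (hB : Continuous B) {C : ℝ}
    (hC : ∀ x, ‖B x‖ ≤ C) :
    ∫ x, gfun τ x * B x = 1 / (I * eta3 τ) * (∑' n, ∫ x, gplusTerm τ n x * B x) -
      ∫ x, gstar τ x * B x := by
  have hbdd {f : ℝ → ℂ} (hf : Integrable f) : Integrable fun x => f x * B x :=
    hf.mul_bdd hB.aestronglyMeasurable (.of_forall hC)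
  have hsum : Summable fun n => ∫ x, ‖gplusTerm τ n x * B x‖ := by
    refine ((summable_integral_norm_gplusTerm hτ).mul_right C).of_nonneg_of_le
      (fun n => integral_nonneg fun _ => norm_nonneg _) fun n => ?_
    rw [← integral_mul_const]
    refine integral_mono (hbdd (integrable_gplusTerm hτ n)).norm
      ((integrable_gplusTerm hτ n).norm.mul_const C) fun x => ?_
    rw [norm_mul]
    exact mul_le_mul_of_nonneg_left (hC x) (norm_nonneg _)
  have hswap : ∑' n, ∫ x, gplusTerm τ n x * B x = ∫ x, ∑' n, gplusTerm τ n x * B x :=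
    integral_tsum_of_summable_integral_norm (fun n => hbdd (integrable_gplusTerm hτ n)) hsum
  rw [hswap, ← integral_const_mul, ← integral_sub _ (hbdd (integrable_gstar hτ))]
  · refine integral_congr_ae (.of_forall fun x => ?_)
    simp only [gfun_eq_tsum_gplusTerm, tsum_mul_right]
    ring
  · simp only [tsum_mul_right]
    exact (hbdd (integrable_tsum_gplusTerm hτ)).const_mul _

theorem norm_gplusTerm_le_of_le_abs_sub {τ : ℂ} (hτ : 0 < τ.im) {δ x : ℝ}
    (hx : ∀ n : ℤ, x ≠ (n : ℝ) + 1 / 2 → δ ≤ |x - ((n : ℝ) + 1 / 2)|) (n : ℕ) :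
    ‖gplusTerm τ n x‖ ≤ ((n : ℝ) + 1 / 2) *
      Real.exp (-(π * τ.im * δ) * (n + 1 / 2)) * Real.exp (-(π * τ.im * δ) * |x|) := by
  refine (norm_gplusTerm_le τ n x).trans ?_
  rcases le_or_gt ((n : ℝ) + 1 / 2) |x| with h | h
  · rw [max_eq_right (sub_nonpos.2 h), zero_mul]
    positivity
  have hδ : δ ≤ (n : ℝ) + 1 / 2 - |x| := by
    rcases abs_cases x with ⟨hx', -⟩ | ⟨hx', -⟩
    · have := hx n (by rw [Int.cast_natCast, ← hx']; exact ne_of_lt (hx' ▸ h))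
      rwa [Int.cast_natCast, ← hx', abs_sub_comm, abs_of_pos (sub_pos.2 h)] at this
    · rw [hx'] at h ⊢
      have := hx (-n - 1) (by push_cast; linarith)
      push_cast at this
      rwa [abs_of_pos (by linarith), show x - (-(n : ℝ) - 1 + 1 / 2) = n + 1 / 2 - -x by ring]
        at this
  rw [max_eq_left (by linarith), mul_assoc _ (Real.exp _), ← Real.exp_add, ← mul_add, neg_mul,
    mul_assoc _ δ]
  gcongr
  linarith [abs_nonneg x]

theorem norm_gfun_le_exp_of_le_abs_sub {τ : ℂ} (hτ : 0 < τ.im) {δ : ℝ} (hδ : 0 < δ) :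
    ∃ K, ∀ x : ℝ, (∀ n : ℤ, x ≠ (n : ℝ) + 1 / 2 → δ ≤ |x - ((n : ℝ) + 1 / 2)|) →
      ‖gfun τ x‖ ≤ K * Real.exp (-(π * τ.im * δ) * |x|) := by
  have hc : 0 < π * τ.im := by positivity
  have hsum : Summable fun n : ℕ =>
      ((n : ℝ) + 1 / 2) * Real.exp (-(π * τ.im * δ) * (n + 1 / 2)) := by
    have h1 := Real.summable_pow_mul_exp_neg_nat_mul 1 (mul_pos hc hδ)
    have h0 := Real.summable_pow_mul_exp_neg_nat_mul 0 (mul_pos hc hδ)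
    refine ((h1.add (h0.mul_left (1 / 2))).mul_right
      (Real.exp (-(π * τ.im * δ) * (1 / 2)))).congr fun n => ?_
    rw [mul_add _ (n : ℝ), Real.exp_add]
    ring
  set S := ∑' n : ℕ, ((n : ℝ) + 1 / 2) * Real.exp (-(π * τ.im * δ) * (n + 1 / 2))
  refine ⟨‖1 / (I * eta3 τ)‖ * S + Real.exp (π * τ.im * (δ / 2) ^ 2), fun x hx => ?_⟩
  have hplus : ‖∑' n, gplusTerm τ n x‖ ≤ S * Real.exp (-(π * τ.im * δ) * |x|) :=
    tsum_of_norm_bounded (hsum.hasSum.mul_right _) (norm_gplusTerm_le_of_le_abs_sub hτ hx)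
  have hstar : ‖gstar τ x‖ ≤
      Real.exp (π * τ.im * (δ / 2) ^ 2) * Real.exp (-(π * τ.im * δ) * |x|) := by
    refine (norm_gstar_le hτ.le x).trans ?_
    rw [← Real.exp_add, Real.exp_le_exp, ← sq_abs x]
    linarith [mul_nonneg hc.le (sq_nonneg (|x| - δ / 2))]
  rw [gfun_eq_tsum_gplusTerm, add_mul, mul_assoc]
  refine (norm_sub_le _ _).trans (add_le_add ?_ hstar)
  rw [norm_mul]
  gcongr

/-! ### The second order equation satisfied by `g_τ` -/

/-- The operator `Φ ↦ 2πiσxΦ - Φ'` on Schwartz functions, which is `-d/dx` conjugated by the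
Gaussian `e(-x²σ/2)`. -/
def gaussianDeriv (σ : ℂ) : 𝓢(ℝ, ℂ) →L[ℂ] 𝓢(ℝ, ℂ) :=
  SchwartzMap.smulLeftCLM ℂ (fun x : ℝ => 2 * π * I * σ * (x : ℂ)) - SchwartzMap.derivCLM ℂ ℂ

theorem gaussianDeriv_apply (σ : ℂ) (Φ : 𝓢(ℝ, ℂ)) (x : ℝ) :
    gaussianDeriv σ Φ x = 2 * π * I * σ * x * Φ x - deriv Φ x := by
  have h : Function.HasTemperateGrowth fun x : ℝ => 2 * π * I * σ * (x : ℂ) := by fun_prop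
  rw [gaussianDeriv, sub_apply, sub_apply, SchwartzMap.smulLeftCLM_apply_apply h,
    SchwartzMap.derivCLM_apply, smul_eq_mul]

/-- The reflection `Φ(-x)` of a Schwartz function. -/
def reflect : 𝓢(ℝ, ℂ) →L[ℂ] 𝓢(ℝ, ℂ) :=
  SchwartzMap.compCLMOfContinuousLinearEquiv ℂ (ContinuousLinearEquiv.neg ℝ)

theorem reflect_apply (Φ : 𝓢(ℝ, ℂ)) (x : ℝ) : reflect Φ x = Φ (-x) := rfl

theorem gaussianDeriv_reflect (σ : ℂ) (Φ : 𝓢(ℝ, ℂ)) :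
    gaussianDeriv σ (reflect Φ) = -reflect (gaussianDeriv σ Φ) := by
  ext x
  have hderiv : deriv (reflect Φ) x = -deriv Φ (-x) := deriv_comp_neg Φ x
  rw [neg_apply, reflect_apply, gaussianDeriv_apply, gaussianDeriv_apply, hderiv, reflect_apply]
  push_cast
  ring

theorem hasDerivAt_gaussian_mul (σ : ℂ) (Φ : 𝓢(ℝ, ℂ)) (x : ℝ) :
    HasDerivAt (fun x => gaussian σ x * Φ x) (-(gaussian σ x * gaussianDeriv σ Φ x)) x := by
  refine ((hasDerivAt_gaussian σ x).mul Φ.differentiableAt.hasDerivAt).congr_deriv ?_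
  rw [gaussianDeriv_apply]
  ring

theorem gaussian_neg (σ : ℂ) (x : ℝ) : gaussian σ (-x) = gaussian σ x := by
  rw [gaussian, gaussian, Complex.ofReal_neg, neg_sq]

theorem exp_mul_gaussian (σ : ℂ) (x : ℝ) :
    (Real.exp (-(2 * π * σ.im * x ^ 2)) : ℂ) * gaussian σ x = gaussian (starRingEnd ℂ σ) x := by
  rw [gaussian, gaussian, e, e, Complex.ofReal_exp, ← Complex.exp_add]
  congr 1
  have hσ := Complex.sub_conj σ
  push_cast at hσ ⊢
  linear_combination -(π * I * (x : ℂ) ^ 2) * hσ - 2 * π * σ.im * (x : ℂ) ^ 2 * I_sq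

theorem integral_sign_mul_comp_abs_mul {p f : ℝ → ℂ}
    (h : Integrable fun x : ℝ => (Real.sign x : ℂ) * (p |x| * f x)) :
    ∫ x : ℝ, (Real.sign x : ℂ) * (p |x| * f x) = ∫ x in Ioi (0 : ℝ), p x * (f x - f (-x)) := by
  rw [← intervalIntegral.integral_Iic_add_Ioi (b := 0) h.integrableOn h.integrableOn, ← neg_zero,
    ← integral_comp_neg_Ioi, neg_zero, ← integral_add h.comp_neg.integrableOn h.integrableOn]
  refine setIntegral_congr_fun measurableSet_Ioi fun x (hx : 0 < x) => ?_
  simp only [abs_neg, abs_of_pos hx, Real.sign_of_pos hx, Real.sign_of_neg (neg_neg_of_pos hx)]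
  push_cast
  ring

theorem integral_Ioi_max_sub_mul {f f' f'' : ℝ → ℂ} (hf : ∀ x, HasDerivAt f (f' x) x)
    (hf' : ∀ x, HasDerivAt f' (f'' x) x) (hc : Continuous f'') {M : ℝ} (hM : 0 ≤ M) :
    ∫ x in Ioi (0 : ℝ), ((max (M - x) 0 : ℝ) : ℂ) * f'' x = f M - f 0 - M * f' 0 := by
  have hsupp : ∫ x in Ioi (0 : ℝ), ((max (M - x) 0 : ℝ) : ℂ) * f'' x =
      ∫ x in Ioc 0 M, ((max (M - x) 0 : ℝ) : ℂ) * f'' x := by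
    refine setIntegral_eq_of_subset_of_forall_sdiff_eq_zero measurableSet_Ioi Ioc_subset_Ioi_self
      fun x hx => ?_
    have hMx : M ≤ x := le_of_not_ge fun h => hx.2 ⟨hx.1, h⟩
    rw [max_eq_right (sub_nonpos.2 hMx), Complex.ofReal_zero, zero_mul]
  have hpos : ∀ x ∈ Ioc 0 M, ((max (M - x) 0 : ℝ) : ℂ) * f'' x = ((M : ℂ) - x) * f'' x :=
    fun x hx => by rw [max_eq_left (sub_nonneg.2 hx.2), Complex.ofReal_sub]
  have hderiv (x : ℝ) : HasDerivAt (fun x : ℝ => ((M : ℂ) - x) * f' x + f x)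
      (((M : ℂ) - x) * f'' x) x := by
    refine (((Complex.ofRealCLM.hasDerivAt.const_sub (M : ℂ)).mul (hf' x)).add
      (hf x)).congr_deriv ?_
    simp only [Complex.ofRealCLM_apply, Complex.ofReal_one]
    ring
  rw [hsupp, setIntegral_congr_fun measurableSet_Ioc hpos, ← intervalIntegral.integral_of_le hM,
    intervalIntegral.integral_eq_sub_of_hasDerivAt (fun x _ => hderiv x)
      (Continuous.intervalIntegrable (by fun_prop) _ _)]
  push_cast
  ring

theorem tendsto_exp_neg_mul_sq_atTop {c : ℝ} (hc : 0 < c) :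
    Tendsto (fun x : ℝ => Real.exp (-c * x ^ 2)) atTop (𝓝 0) := by
  simp only [neg_mul]
  exact Real.tendsto_exp_neg_atTop_nhds_zero.comp
    ((tendsto_pow_atTop two_ne_zero).const_mul_atTop hc)

theorem norm_mul_le_of_le_exp {v C x : ℝ} {a z : ℂ} (ha : ‖a‖ ≤ Real.exp (-(2 * π * v * x ^ 2)))
    (hz : ‖z‖ ≤ C * Real.exp (π * v * x ^ 2)) :
    ‖a * z‖ ≤ C * Real.exp (-(π * v) * x ^ 2) := by
  calc ‖a * z‖ ≤ Real.exp (-(2 * π * v * x ^ 2)) * (C * Real.exp (π * v * x ^ 2)) := by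
        rw [norm_mul]
        gcongr
    _ = C * (Real.exp (-(2 * π * v * x ^ 2)) * Real.exp (π * v * x ^ 2)) := by ring
    _ = C * Real.exp (-(π * v) * x ^ 2) := by
        rw [← Real.exp_add]
        ring_nf

theorem norm_exp_mul_le_of_le_exp {v C x : ℝ} {z : ℂ} (hz : ‖z‖ ≤ C * Real.exp (π * v * x ^ 2)) :
    ‖(Real.exp (-(2 * π * v * x ^ 2)) : ℂ) * z‖ ≤ C * Real.exp (-(π * v) * x ^ 2) :=
  norm_mul_le_of_le_exp (Complex.norm_of_nonneg (Real.exp_pos _).le).le hz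

theorem norm_erfcTail_mul_le_of_le_exp {v C x : ℝ} {z : ℂ} (hv : 0 ≤ v) (hx : 0 ≤ x)
    (hz : ‖z‖ ≤ C * Real.exp (π * v * x ^ 2)) :
    ‖(erfcTail v x : ℂ) * z‖ ≤ C * Real.exp (-(π * v) * x ^ 2) :=
  norm_mul_le_of_le_exp
    ((Complex.norm_of_nonneg (erfcTail_nonneg v x)).trans_le (erfcTail_le hv hx)) hz

theorem integrable_mul_exp_mul {v C : ℝ} (hv : 0 < v) {f : ℝ → ℂ} (hf : Continuous f)
    (hC : ∀ x, ‖f x‖ ≤ C * Real.exp (π * v * x ^ 2)) :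
    Integrable fun x : ℝ => (x : ℂ) * (Real.exp (-(2 * π * v * x ^ 2)) * f x) := by
  refine ((integrable_mul_exp_neg_mul_sq (mul_pos Real.pi_pos hv)).norm.const_mul C).mono'
    (by fun_prop) (.of_forall fun x => ?_)
  rw [norm_mul, norm_mul x, Real.norm_of_nonneg (Real.exp_pos _).le, Complex.norm_real,
    mul_left_comm C]
  exact mul_le_mul_of_nonneg_left (norm_exp_mul_le_of_le_exp (hC x)) (norm_nonneg x)

theorem integrableOn_Ioi_erfcTail_mul {v C : ℝ} (hv : 0 < v) {f : ℝ → ℂ} (hf : Continuous f)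
    (hC : ∀ x, ‖f x‖ ≤ C * Real.exp (π * v * x ^ 2)) :
    IntegrableOn (fun x : ℝ => erfcTail v x * f x) (Ioi 0) := by
  have hcont : Continuous fun x : ℝ => (erfcTail v x : ℂ) * f x :=
    (Complex.continuous_ofReal.comp (continuous_erfcTail hv.le)).mul hf
  refine ((integrable_exp_neg_mul_sq (mul_pos Real.pi_pos hv)).const_mul C).integrableOn.mono'
    hcont.aestronglyMeasurable ?_
  filter_upwards [self_mem_ae_restrict measurableSet_Ioi] with x hx
  exact norm_erfcTail_mul_le_of_le_exp hv.le (le_of_lt hx) (hC x)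

theorem tendsto_erfcTail_mul_add_atTop {v C₀ C₁ : ℝ} (hv : 0 < v) {f f' : ℝ → ℂ}
    (hC₀ : ∀ x, ‖f x‖ ≤ C₀ * Real.exp (π * v * x ^ 2))
    (hC₁ : ∀ x, ‖f' x‖ ≤ C₁ * Real.exp (π * v * x ^ 2)) :
    Tendsto (fun x : ℝ => erfcTail v x * f' x + √(2 * v) *
      (Real.exp (-(2 * π * v * x ^ 2)) * f x)) atTop (𝓝 0) := by
  have hlim (C : ℝ) : Tendsto (fun x => C * Real.exp (-(π * v) * x ^ 2)) atTop (𝓝 0) := by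
    simpa using (tendsto_exp_neg_mul_sq_atTop (mul_pos Real.pi_pos hv)).const_mul C
  have h₁ : Tendsto (fun x : ℝ => erfcTail v x * f' x) atTop (𝓝 0) :=
    squeeze_zero_norm' ((eventually_ge_atTop 0).mono fun x hx =>
      norm_erfcTail_mul_le_of_le_exp hv.le hx (hC₁ x)) (hlim C₁)
  have h₀ : Tendsto (fun x : ℝ => Real.exp (-(2 * π * v * x ^ 2)) * f x) atTop (𝓝 0) :=
    squeeze_zero_norm (fun x => norm_exp_mul_le_of_le_exp (hC₀ x)) (hlim C₀)
  simpa using h₁.add (h₀.const_mul (√(2 * v) : ℂ))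

theorem hasDerivAt_erfcTail_mul_add {v : ℝ} (hv : 0 ≤ v) {f f' : ℝ → ℂ} {x : ℝ} {d : ℂ}
    (hf : HasDerivAt f (f' x) x) (hf' : HasDerivAt f' d x) :
    HasDerivAt (fun x : ℝ =>
        erfcTail v x * f' x + √(2 * v) * (Real.exp (-(2 * π * v * x ^ 2)) * f x))
      (erfcTail v x * d -
        4 * π * v * √(2 * v) * (x * (Real.exp (-(2 * π * v * x ^ 2)) * f x))) x := by
  have hexp := ((hasDerivAt_pow 2 x).const_mul (2 * π * v)).neg.exp
  refine (((hasDerivAt_erfcTail hv x).ofReal_comp.mul hf').add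
    ((hexp.ofReal_comp.mul hf).const_mul _)).congr_deriv ?_
  simp only [Nat.cast_ofNat, Nat.add_one_sub_one, pow_one, Pi.neg_apply]
  push_cast
  ring

theorem integral_Ioi_erfcTail_mul {v : ℝ} (hv : 0 < v) {f f' f'' : ℝ → ℂ}
    (hf : ∀ x, HasDerivAt f (f' x) x) (hf' : ∀ x, HasDerivAt f' (f'' x) x) (hc : Continuous f'')
    {C₀ C₁ C₂ : ℝ} (hC₀ : ∀ x, ‖f x‖ ≤ C₀ * Real.exp (π * v * x ^ 2))
    (hC₁ : ∀ x, ‖f' x‖ ≤ C₁ * Real.exp (π * v * x ^ 2))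
    (hC₂ : ∀ x, ‖f'' x‖ ≤ C₂ * Real.exp (π * v * x ^ 2)) :
    ∫ x in Ioi (0 : ℝ), erfcTail v x * f'' x = 4 * π * v * √(2 * v) *
      (∫ x in Ioi (0 : ℝ), (x : ℂ) * (Real.exp (-(2 * π * v * x ^ 2)) * f x)) -
        f' 0 / 2 - √(2 * v) * f 0 := by
  have hfc : Continuous f := continuous_iff_continuousAt.2 fun x => (hf x).continuousAt
  have hint₂ := integrableOn_Ioi_erfcTail_mul hv hc hC₂
  have hint₀ := (integrable_mul_exp_mul hv hfc hC₀).integrableOn (s := Ioi 0) |>.const_mul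
    (4 * π * v * √(2 * v) : ℂ)
  have hFTC := integral_Ioi_of_hasDerivAt_of_tendsto'
    (fun x _ => hasDerivAt_erfcTail_mul_add hv.le (hf x) (hf' x)) (hint₂.sub hint₀)
    (tendsto_erfcTail_mul_add_atTop hv hC₀ hC₁)
  rw [integral_sub hint₂ hint₀, integral_const_mul, erfcTail_zero, zero_pow two_ne_zero, mul_zero,
    neg_zero, Real.exp_zero] at hFTC
  push_cast at hFTC ⊢
  linear_combination hFTC

theorem exists_norm_le (Φ : 𝓢(ℝ, ℂ)) : ∃ C, ∀ x, ‖Φ x‖ ≤ C :=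
  ⟨_, SchwartzMap.norm_le_seminorm ℂ Φ⟩

theorem integrable_mul_gaussian_conj_mul {σ : ℂ} (hσ : 0 < σ.im) (Φ : 𝓢(ℝ, ℂ)) :
    Integrable fun x : ℝ => (x : ℂ) * (gaussian (starRingEnd ℂ σ) x * Φ x) := by
  obtain ⟨C, hC⟩ := exists_norm_le Φ
  simp only [← mul_assoc]
  exact (integrable_mul_gaussian (by simpa using hσ)).mul_bdd Φ.continuous.aestronglyMeasurable
    (.of_forall hC)

theorem norm_gaussian_mul_le {C : ℝ} {Φ : 𝓢(ℝ, ℂ)} (hC : ∀ x, ‖Φ x‖ ≤ C) (σ : ℂ) (x : ℝ) :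
    ‖gaussian σ x * Φ x‖ ≤ C * Real.exp (π * σ.im * x ^ 2) := by
  rw [norm_mul, norm_gaussian, mul_comm]
  gcongr
  exact hC x

theorem integral_mul_eq_integral_Ioi {f : ℝ → ℂ} (h : Integrable fun x : ℝ => (x : ℂ) * f x) :
    ∫ x : ℝ, (x : ℂ) * f x = ∫ x in Ioi (0 : ℝ), (x : ℂ) * (f x - f (-x)) := by
  have hsign (x : ℝ) : (x : ℂ) * f x = Real.sign x * ((|x| : ℝ) * f x) := by
    rw [← mul_assoc, ← Complex.ofReal_mul, mul_comm, mul_comm (Real.sign x)]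
    rcases lt_trichotomy x 0 with hx | rfl | hx
    · rw [Real.sign_of_neg hx, abs_of_neg hx, neg_mul_neg, mul_one, mul_comm]
    · simp
    · rw [Real.sign_of_pos hx, abs_of_pos hx, mul_one, mul_comm]
  simp only [hsign] at h
  rw [integral_congr_ae (.of_forall hsign)]
  exact integral_sign_mul_comp_abs_mul (p := fun s => (s : ℂ)) h

theorem gaussian_zero (σ : ℂ) : gaussian σ 0 = 1 := by
  simp [gaussian, e]

theorem integral_gaussian_mul_sign_mul_gaussianDeriv {σ : ℂ} {p : ℝ → ℂ} {Φ : 𝓢(ℝ, ℂ)}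
    (h : Integrable fun x : ℝ =>
      gaussian σ x * (Real.sign x * p |x|) * gaussianDeriv σ (gaussianDeriv σ Φ) x) :
    ∫ x : ℝ, gaussian σ x * (Real.sign x * p |x|) * gaussianDeriv σ (gaussianDeriv σ Φ) x =
      ∫ x in Ioi (0 : ℝ),
        p x * (gaussian σ x * gaussianDeriv σ (gaussianDeriv σ (Φ - reflect Φ)) x) := by
  have hcomm (x : ℝ) :
      gaussian σ x * (Real.sign x * p |x|) * gaussianDeriv σ (gaussianDeriv σ Φ) x =
        Real.sign x * (p |x| * (gaussian σ x * gaussianDeriv σ (gaussianDeriv σ Φ) x)) := by ring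
  simp only [hcomm] at h ⊢
  rw [integral_sign_mul_comp_abs_mul
    (f := fun x => gaussian σ x * gaussianDeriv σ (gaussianDeriv σ Φ) x) h]
  simp only [map_sub, gaussianDeriv_reflect, map_neg, neg_neg, sub_apply, reflect_apply,
    gaussian_neg, mul_sub]

theorem hasDerivAt_gaussian_mul_gaussianDeriv (σ : ℂ) (Φ : 𝓢(ℝ, ℂ)) (x : ℝ) :
    HasDerivAt (fun x => -(gaussian σ x * gaussianDeriv σ Φ x))
      (gaussian σ x * gaussianDeriv σ (gaussianDeriv σ Φ) x) x := by
  exact (hasDerivAt_gaussian_mul σ (gaussianDeriv σ Φ) x).fun_neg.congr_deriv (neg_neg _)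

theorem gaussianDeriv_sub_reflect_zero (σ : ℂ) (Φ : 𝓢(ℝ, ℂ)) :
    gaussianDeriv σ (Φ - reflect Φ) 0 = 2 * gaussianDeriv σ Φ 0 := by
  rw [map_sub, gaussianDeriv_reflect, sub_neg_eq_add, add_apply, reflect_apply, neg_zero, two_mul]

theorem integral_gstar_mul_gaussianDeriv {σ : ℂ} (hσ : 0 < σ.im) (Φ : 𝓢(ℝ, ℂ)) :
    ∫ x, gstar σ x * gaussianDeriv σ (gaussianDeriv σ Φ) x = gaussianDeriv σ Φ 0 +
      4 * π * σ.im * √(2 * σ.im) *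
        ∫ x : ℝ, (x : ℂ) * (gaussian (starRingEnd ℂ σ) x * Φ x) := by
  obtain ⟨C₀, hC₀⟩ := exists_norm_le (Φ - reflect Φ)
  obtain ⟨C₁, hC₁⟩ := exists_norm_le (gaussianDeriv σ (Φ - reflect Φ))
  obtain ⟨C₂, hC₂⟩ := exists_norm_le (gaussianDeriv σ (gaussianDeriv σ (Φ - reflect Φ)))
  obtain ⟨C, hC⟩ := exists_norm_le (gaussianDeriv σ (gaussianDeriv σ Φ))
  have hint := (integrable_gstar hσ).mul_bdd
    (gaussianDeriv σ (gaussianDeriv σ Φ)).continuous.aestronglyMeasurable (.of_forall hC)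
  simp only [gstar_eq] at hint ⊢
  rw [integral_gaussian_mul_sign_mul_gaussianDeriv (p := fun s => (erfcTail σ.im s : ℂ)) hint,
    integral_Ioi_erfcTail_mul hσ (hasDerivAt_gaussian_mul σ (Φ - reflect Φ))
      (hasDerivAt_gaussian_mul_gaussianDeriv σ (Φ - reflect Φ))
      ((continuous_gaussian σ).mul (SchwartzMap.continuous _)) (norm_gaussian_mul_le hC₀ σ)
      (fun x => (norm_neg _).trans_le (norm_gaussian_mul_le hC₁ σ x)) (norm_gaussian_mul_le hC₂ σ),
    integral_mul_eq_integral_Ioi (integrable_mul_gaussian_conj_mul hσ Φ)]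
  simp only [← mul_assoc (Complex.ofReal (Real.exp _)), exp_mul_gaussian, gaussian_neg,
    gaussian_zero, gaussianDeriv_sub_reflect_zero, sub_apply, reflect_apply, neg_zero, sub_self,
    mul_sub]
  ring

theorem halfIntSample_eq_thetaCoeff_mul (σ : ℂ) (f : ℝ → ℂ) (n : ℤ) :
    halfIntSample f n =
      thetaCoeff σ n * (gaussian σ ((n : ℝ) + 1 / 2) * f ((n : ℝ) + 1 / 2)) := by
  have hphase : ((n : ℂ) + 1 / 2) / 2 = (((n : ℂ) + 1 / 2) ^ 2 / 2 * σ + ((n : ℂ) + 1 / 2) / 2) +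
      -(((n : ℝ) + 1 / 2 : ℝ) : ℂ) ^ 2 * σ / 2 := by
    push_cast
    ring
  rw [halfIntSample, hphase, e_add, gaussian, thetaCoeff, mul_assoc]

theorem halfIntSample_neg_add_one (σ : ℂ) (f : ℝ → ℂ) (n : ℤ) :
    halfIntSample f (-(n + 1)) =
      -(thetaCoeff σ n * (gaussian σ ((n : ℝ) + 1 / 2) * f (-((n : ℝ) + 1 / 2)))) := by
  have hneg : ((-(n + 1) : ℤ) : ℝ) + 1 / 2 = -((n : ℝ) + 1 / 2) := by
    push_cast
    ring
  rw [halfIntSample_eq_thetaCoeff_mul σ, hneg, gaussian_neg, thetaCoeff_neg_add_one, neg_mul]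

theorem integral_gplusTerm_mul_gaussianDeriv {σ : ℂ} (hσ : 0 < σ.im) (Φ : 𝓢(ℝ, ℂ)) (n : ℕ) :
    ∫ x, gplusTerm σ n x * gaussianDeriv σ (gaussianDeriv σ Φ) x =
      halfIntSample Φ n + halfIntSample Φ (-(n + 1)) +
        2 * gaussianDeriv σ Φ 0 * ((n + 1 / 2) * thetaCoeff σ n) := by
  have hterm (x : ℝ) : gplusTerm σ n x = gaussian σ x *
      (Real.sign x * (thetaCoeff σ n * ((max ((n : ℝ) + 1 / 2 - |x|) 0 : ℝ) : ℂ))) := by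
    rw [gplusTerm, oddTent, Complex.ofReal_mul]
    ring
  obtain ⟨C, hC⟩ := exists_norm_le (gaussianDeriv σ (gaussianDeriv σ Φ))
  have hint := (integrable_gplusTerm hσ n).mul_bdd
    (gaussianDeriv σ (gaussianDeriv σ Φ)).continuous.aestronglyMeasurable (.of_forall hC)
  simp only [hterm] at hint ⊢
  rw [integral_gaussian_mul_sign_mul_gaussianDeriv
    (p := fun s => thetaCoeff σ n * ((max ((n : ℝ) + 1 / 2 - s) 0 : ℝ) : ℂ)) hint]
  simp only [mul_assoc (thetaCoeff σ n)]
  rw [integral_const_mul, integral_Ioi_max_sub_mul (hasDerivAt_gaussian_mul σ (Φ - reflect Φ))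
    (hasDerivAt_gaussian_mul_gaussianDeriv σ (Φ - reflect Φ))
    ((continuous_gaussian σ).mul (SchwartzMap.continuous _)) (by positivity),
    halfIntSample_eq_thetaCoeff_mul σ, halfIntSample_neg_add_one σ]
  simp only [gaussian_zero, gaussianDeriv_sub_reflect_zero, sub_apply, reflect_apply, neg_zero,
    sub_self, Int.cast_natCast]
  push_cast
  ring

theorem summable_halfIntSample_schwartz (Φ : 𝓢(ℝ, ℂ)) : Summable (halfIntSample Φ) :=
  summable_halfIntSample one_lt_two (by simpa using Φ.isBigO_cocompact_rpow (-2))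

theorem integral_gfun_mul_gaussianDeriv {σ : ℂ} (hσ : 0 < σ.im) (Φ : 𝓢(ℝ, ℂ)) :
    ∫ x, gfun σ x * gaussianDeriv σ (gaussianDeriv σ Φ) x =
      1 / (I * eta3 σ) * ∑' n : ℤ, halfIntSample Φ n - 4 * π * σ.im * √(2 * σ.im) *
        ∫ x : ℝ, (x : ℂ) * (gaussian (starRingEnd ℂ σ) x * Φ x) := by
  obtain ⟨C, hC⟩ := exists_norm_le (gaussianDeriv σ (gaussianDeriv σ Φ))
  have hΦ := (summable_halfIntSample_schwartz Φ).hasSum.nat_add_neg_add_one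
  have hθ := (summable_mul_thetaCoeff_nat hσ).hasSum.mul_left (2 * gaussianDeriv σ Φ 0)
  have hsum : ∑' n : ℕ, ∫ x, gplusTerm σ n x * gaussianDeriv σ (gaussianDeriv σ Φ) x =
      ∑' n : ℤ, halfIntSample Φ n + gaussianDeriv σ Φ 0 * (I * eta3 σ) := by
    simp only [integral_gplusTerm_mul_gaussianDeriv hσ]
    rw [(hΦ.add hθ).tsum_eq, eta3_eq_tsum_nat hσ]
    linear_combination 2 * gaussianDeriv σ Φ 0 *
      (∑' n : ℕ, ((n : ℂ) + 1 / 2) * thetaCoeff σ n) * I_sq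
  rw [integral_gfun_mul hσ (SchwartzMap.continuous _) hC, hsum,
    integral_gstar_mul_gaussianDeriv hσ]
  linear_combination gaussianDeriv σ Φ 0 *
    one_div_mul_cancel (mul_ne_zero I_ne_zero (eta3_ne_zero hσ))

/-! ### The Fourier transform of `g_{-1/τ}` -/

open scoped LineDeriv in
theorem gaussianDeriv_eq_lineDerivOp (σ : ℂ) (Φ : 𝓢(ℝ, ℂ)) :
    gaussianDeriv σ Φ =
      (2 * π * I * σ) • SchwartzMap.smulLeftCLM ℂ (inner ℝ · (1 : ℝ)) Φ - ∂_{(1 : ℝ)} Φ := by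
  have h : Function.HasTemperateGrowth (inner ℝ · (1 : ℝ)) :=
    ((innerSL ℝ).flip (1 : ℝ)).hasTemperateGrowth
  ext x
  rw [gaussianDeriv_apply, sub_apply, smul_apply, SchwartzMap.smulLeftCLM_apply_apply h,
    SchwartzMap.lineDerivOp_apply_eq_fderiv, fderiv_apply_one_eq_deriv, RCLike.inner_apply',
    conj_trivial, mul_one, Complex.real_smul, smul_eq_mul, mul_assoc]

theorem fourier_gaussianDeriv {τ : ℂ} (hτ : τ ≠ 0) (Φ : 𝓢(ℝ, ℂ)) :
    𝓕 (gaussianDeriv τ Φ) = τ • gaussianDeriv (-1 / τ) (𝓕 Φ) := by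
  have hcoef : τ * (2 * π * I * (-1 / τ)) = -(2 * π * I) := by
    field_simp
  rw [gaussianDeriv_eq_lineDerivOp, gaussianDeriv_eq_lineDerivOp, smul_sub, smul_smul, hcoef,
    SchwartzMap.lineDerivOp_fourier_eq, sub_eq_add_neg, FourierTransform.fourier_add,
    FourierTransform.fourier_neg, SchwartzMap.fourier_lineDerivOp_eq,
    FourierTransform.fourier_smul, FourierTransform.fourier_smul]
  module

theorem fourier_gaussianDeriv_gaussianDeriv {τ : ℂ} (hτ : τ ≠ 0) (Φ : 𝓢(ℝ, ℂ)) :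
    𝓕 (gaussianDeriv τ (gaussianDeriv τ Φ)) =
      τ ^ 2 • gaussianDeriv (-1 / τ) (gaussianDeriv (-1 / τ) (𝓕 Φ)) := by
  rw [fourier_gaussianDeriv hτ, fourier_gaussianDeriv hτ, map_smul, smul_smul, sq]

theorem integral_fourier_mul_eq {f g : ℝ → ℂ} (hf : Integrable f) (hg : Integrable g) :
    ∫ x, 𝓕 f x * g x = ∫ x, f x * 𝓕 g x := by
  simpa using! VectorFourier.integral_bilin_fourierIntegral_eq_flip (ContinuousLinearMap.mul ℂ ℂ)
    (L := innerₗ ℝ) Real.continuous_fourierChar continuous_inner hf hg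

theorem sqrtNegI_ofReal_sq_mul {r : ℝ} (hr : 0 < r) {τ : ℂ} (hτ : τ ≠ 0) :
    sqrtNegI ((r : ℂ) ^ 2 * τ) = r * sqrtNegI τ := by
  have hτ' : -I * τ ≠ 0 := mul_ne_zero (neg_ne_zero.2 I_ne_zero) hτ
  have hr' : (r : ℂ) ≠ 0 := Complex.ofReal_ne_zero.2 hr.ne'
  have hlog : Complex.log (-I * ((r : ℂ) ^ 2 * τ)) = 2 * Real.log r + Complex.log (-I * τ) := by
    rw [mul_left_comm, ← Complex.ofReal_pow, Complex.log_ofReal_mul (by positivity) hτ',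
      Real.log_pow]
    push_cast
    rfl
  rw [sqrtNegI, sqrtNegI, Complex.cpow_def_of_ne_zero hτ', Complex.cpow_def_of_ne_zero
    (mul_ne_zero (neg_ne_zero.2 I_ne_zero) (mul_ne_zero (pow_ne_zero 2 hr') hτ)), hlog, add_mul,
    Complex.exp_add]
  congr 1
  rw [mul_right_comm, mul_one_div_cancel two_ne_zero, one_mul, ← Complex.ofReal_exp,
    Real.exp_log hr]

theorem integral_mul_gaussian_conj_mul_fourier {τ : ℂ} (hτ : 0 < τ.im) (Φ : 𝓢(ℝ, ℂ)) :
    ∫ x : ℝ, (x : ℂ) * (gaussian (starRingEnd ℂ (-1 / τ)) x * (𝓕 Φ : 𝓢(ℝ, ℂ)) x) =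
      starRingEnd ℂ τ * ‖τ‖ / sqrtNegI τ *
        ∫ x : ℝ, (x : ℂ) * (gaussian (starRingEnd ℂ τ) x * Φ x) := by
  have hτ₀ := ne_zero_of_im_pos hτ
  have hnorm : (‖τ‖ : ℂ) ≠ 0 := Complex.ofReal_ne_zero.2 (norm_ne_zero_iff.2 hτ₀)
  have hconj := Complex.conj_mul' τ
  set ρ : ℂ := ((‖τ‖⁻¹ : ℝ) : ℂ) ^ 2 * τ with hρ
  have hρ_im : 0 < ρ.im := by
    rw [hρ, ← Complex.ofReal_pow, Complex.im_ofReal_mul]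
    positivity
  have hρ_inv : 1 / ρ = starRingEnd ℂ τ := by
    rw [hρ, div_eq_iff (by simp [hτ₀])]
    push_cast
    field_simp
    exact hconj.symm
  have hneg : starRingEnd ℂ (-1 / τ) = -ρ := by
    rw [map_div₀, ← hρ_inv]
    simp
  have hcoef : 1 / (ρ * sqrtNegI ρ) = starRingEnd ℂ τ * ‖τ‖ / sqrtNegI τ := by
    rw [← one_div_mul_one_div, hρ_inv, hρ,
      sqrtNegI_ofReal_sq_mul (inv_pos.2 (norm_pos_iff.2 hτ₀)) hτ₀]
    push_cast
    field_simp
  have hpair := integral_fourier_mul_eq (integrable_mul_gaussian (τ := -ρ) (by simpa using hρ_im))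
    Φ.integrable
  rw [fourier_mul_gaussian hρ_im, hρ_inv, hcoef] at hpair
  simp only [mul_assoc] at hpair
  rw [hneg, ← integral_const_mul]
  exact hpair.symm

theorem sqrt_two_mul_im_neg_one_div (τ : ℂ) :
    √(2 * (-1 / τ).im) = √(2 * τ.im) / ‖τ‖ := by
  rw [im_neg_one_div, ← mul_div_assoc, Real.sqrt_div' _ (sq_nonneg _),
    Real.sqrt_sq (norm_nonneg τ)]

theorem integral_fourier_gfun_mul_gaussianDeriv {τ : ℂ} (hτ : 0 < τ.im) (Φ : 𝓢(ℝ, ℂ)) :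
    ∫ x, 𝓕 (gfun (-1 / τ)) x * gaussianDeriv τ (gaussianDeriv τ Φ) x =
      I * sqrtNegI τ * ∫ x, gfun τ x * gaussianDeriv τ (gaussianDeriv τ Φ) x := by
  have hτ₀ := ne_zero_of_im_pos hτ
  have hσ := neg_one_div_im_pos hτ
  have hsqrt := sqrtNegI_ne_zero hτ₀
  have hpoisson : ∑' n : ℤ, halfIntSample Φ n =
      I * ∑' n : ℤ, halfIntSample (𝓕 Φ : 𝓢(ℝ, ℂ)) n :=
    tsum_halfIntSample_eq Φ.continuous one_lt_two (by simpa using Φ.isBigO_cocompact_rpow (-2))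
      (summable_halfIntSample_schwartz (𝓕 Φ))
  rw [integral_fourier_mul_eq (integrable_gfun hσ) (SchwartzMap.integrable _),
    ← SchwartzMap.fourier_coe, fourier_gaussianDeriv_gaussianDeriv hτ₀]
  simp only [smul_apply, smul_eq_mul, mul_left_comm _ (τ ^ 2)]
  rw [integral_const_mul, integral_gfun_mul_gaussianDeriv hσ, integral_gfun_mul_gaussianDeriv hτ,
    integral_mul_gaussian_conj_mul_fourier hτ, eta3_neg_one_div hτ, hpoisson,
    sqrt_two_mul_im_neg_one_div, im_neg_one_div]
  have hS : τ ^ 2 * (1 / (I * (-I * τ * sqrtNegI τ * eta3 τ))) =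
      I * sqrtNegI τ * (1 / (I * eta3 τ) * I) := by
    have hη := eta3_ne_zero hτ
    field_simp
    linear_combination -I ^ 3 * sqrtNegI_sq τ + τ * (I ^ 2 - 1) * I_sq
  have hJ : τ ^ 2 * (1 / ‖τ‖ ^ 2 * (1 / ‖τ‖) * (starRingEnd ℂ τ * ‖τ‖ / sqrtNegI τ)) =
      I * sqrtNegI τ := by
    have hnorm : (‖τ‖ : ℂ) ≠ 0 := Complex.ofReal_ne_zero.2 (norm_ne_zero_iff.2 hτ₀)
    field_simp
    linear_combination τ * Complex.conj_mul' τ - I * ‖τ‖ ^ 2 * sqrtNegI_sq τ +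
      τ * ‖τ‖ ^ 2 * I_sq
  push_cast
  linear_combination (∑' n : ℤ, halfIntSample (𝓕 Φ : 𝓢(ℝ, ℂ)) n) * hS -
    4 * π * τ.im * √(2 * τ.im) *
      (∫ x : ℝ, (x : ℂ) * (gaussian (starRingEnd ℂ τ) x * Φ x)) * hJ

theorem eq_zero_of_hasDerivAt_zero_of_tendsto {E : Type*} [NormedAddCommGroup E]
    [NormedSpace ℝ E] {F F' : ℝ → E} (hF : ∀ t, HasDerivAt F (F' t) t)
    (hF' : ∀ t, HasDerivAt F' 0 t) (hlim : Tendsto F atTop (𝓝 0)) (t : ℝ) : F t = 0 := by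
  have hconst (s : ℝ) : F' s = F' 0 :=
    is_const_of_deriv_eq_zero (fun s => (hF' s).differentiableAt) (fun s => (hF' s).deriv) s 0
  have haffine (s : ℝ) : F s - s • F' 0 = F 0 := by
    have hzero (s : ℝ) : HasDerivAt (fun s => F s - s • F' 0) 0 s :=
      ((hF s).sub ((hasDerivAt_id s).smul_const (F' 0))).congr_deriv (by simp [hconst s])
    simpa using is_const_of_deriv_eq_zero (fun s => (hzero s).differentiableAt)
      (fun s => (hzero s).deriv) s 0
  have hslope : F' 0 = 0 := by
    have hdiff : (fun s => F (s + 1) - F s) = fun _ => F' 0 := by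
      funext s
      rw [← sub_add_cancel (F (s + 1)) ((s + 1) • F' 0), ← sub_add_cancel (F s) (s • F' 0),
        haffine, haffine, add_smul, one_smul]
      abel
    have h := (hlim.comp (tendsto_atTop_add_const_right _ 1 tendsto_id)).sub hlim
    rw [sub_zero] at h
    exact tendsto_nhds_unique tendsto_const_nhds (h.congr (congrFun hdiff))
  simp only [hslope, smul_zero, sub_zero] at haffine
  rw [haffine]
  exact tendsto_nhds_unique tendsto_const_nhds (hlim.congr haffine)

theorem exists_norm_le_of_tendsto_cocompact {U : ℝ → ℂ} (hU : Continuous U)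
    (hlim : Tendsto U (cocompact ℝ) (𝓝 0)) : ∃ B, ∀ x, ‖U x‖ ≤ B := by
  let V : ZeroAtInftyContinuousMap ℝ ℂ := ⟨⟨U, hU⟩, hlim⟩
  exact ⟨‖V.toBCF‖, V.toBCF.norm_coe_le_norm⟩

theorem tendsto_convolution_atTop {ρ U : ℝ → ℂ} (hρ : Integrable ρ) (hU : Continuous U)
    (hlim : Tendsto U (cocompact ℝ) (𝓝 0)) :
    Tendsto (convolution ρ U (ContinuousLinearMap.mul ℝ ℂ) volume) atTop (𝓝 0) := by
  obtain ⟨B, hB⟩ := exists_norm_le_of_tendsto_cocompact hU hlim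
  have h : Tendsto (fun t : ℝ => ∫ s, ρ s * U (t - s)) atTop (𝓝 (∫ _ : ℝ, (0 : ℂ))) := by
    refine tendsto_integral_filter_of_dominated_convergence (fun s => ‖ρ s‖ * B)
      (.of_forall fun t => hρ.aestronglyMeasurable.mul (by fun_prop))
      (.of_forall fun t => .of_forall fun s => ?_) (hρ.norm.mul_const B)
      (.of_forall fun s => ?_)
    · rw [norm_mul]
      gcongr
      exact hB _
    · have hshift : Tendsto (fun t : ℝ => t - s) atTop (cocompact ℝ) :=
        (tendsto_atTop_add_const_right _ (-s) tendsto_id).mono_right atTop_le_cocompact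
      simpa using (hlim.comp hshift).const_mul (ρ s)
  simpa using! h

theorem convolution_deriv_deriv_eq_zero {U : ℝ → ℂ}
    (h : ∀ ψ : ℝ → ℂ, ContDiff ℝ ∞ ψ → HasCompactSupport ψ → ∫ x, deriv (deriv ψ) x * U x = 0)
    {ρ : ℝ → ℂ} (hρ : ContDiff ℝ ∞ ρ) (hρc : HasCompactSupport ρ) (t : ℝ) :
    convolution (deriv (deriv ρ)) U (ContinuousLinearMap.mul ℝ ℂ) volume t = 0 := by
  have hderiv : deriv (deriv fun x => ρ (t - x)) = fun x => deriv (deriv ρ) (t - x) := by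
    rw [funext (deriv_comp_const_sub (f := ρ) t)]
    funext x
    rw [deriv.fun_neg, deriv_comp_const_sub, neg_neg]
  have hψ := h (fun x => ρ (t - x)) (hρ.comp (contDiff_const.sub contDiff_id))
    (hρc.comp_homeomorph (Homeomorph.subLeft t))
  rw [hderiv] at hψ
  rw [← hψ, convolution_def,
    ← integral_sub_left_eq_self (fun s => deriv (deriv ρ) (t - s) * U s) volume t]
  simp

/-- Mollifying a weak solution of `U'' = 0` gives classical solutions. -/
theorem eq_zero_of_integral_deriv_deriv_mul_eq_zero {U : ℝ → ℂ} (hU : Continuous U)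
    (hlim : Tendsto U (cocompact ℝ) (𝓝 0))
    (h : ∀ ψ : ℝ → ℂ, ContDiff ℝ ∞ ψ → HasCompactSupport ψ → ∫ x, deriv (deriv ψ) x * U x = 0) :
    U = 0 := by
  have hconv {ρ : ℝ → ℂ} (hρ : ContDiff ℝ ∞ ρ) (hρc : HasCompactSupport ρ) (t : ℝ) :
      convolution ρ U (ContinuousLinearMap.mul ℝ ℂ) volume t = 0 := by
    have hρ' : ContDiff ℝ ∞ (deriv ρ) := (contDiff_infty_iff_deriv.1 hρ).2
    refine eq_zero_of_hasDerivAt_zero_of_tendsto (fun s => hρc.hasDerivAt_convolution_left _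
      (hρ.of_le (by norm_num)) hU.locallyIntegrable s) (fun s => ?_)
      (tendsto_convolution_atTop (hρ.continuous.integrable_of_hasCompactSupport hρc) hU hlim) t
    rw [← convolution_deriv_deriv_eq_zero h hρ hρc s]
    exact hρc.deriv.hasDerivAt_convolution_left _ (hρ'.of_le (by norm_num)) hU.locallyIntegrable s
  have hneg : Continuous fun s => U (0 - s) := by fun_prop
  have hae := ae_eq_zero_of_integral_contDiff_smul_eq_zero (μ := volume) hneg.locallyIntegrable
    fun ρ hρ hρc => by
      simpa [convolution_def] using hconv (Complex.ofRealCLM.contDiff.comp hρ)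
        (hρc.comp_left (g := fun r : ℝ => (r : ℂ)) Complex.ofReal_zero) 0
  funext x
  simpa using congrFun ((hneg.ae_eq_iff_eq volume continuous_const).1 hae) (-x)

theorem deriv_deriv_gaussian_mul (σ : ℂ) (Φ : 𝓢(ℝ, ℂ)) :
    deriv (deriv fun x => gaussian σ x * Φ x) =
      fun x => gaussian σ x * gaussianDeriv σ (gaussianDeriv σ Φ) x := by
  have hderiv : deriv (fun x => gaussian σ x * Φ x) =
      fun x => -(gaussian σ x * gaussianDeriv σ Φ x) :=
    funext fun x => (hasDerivAt_gaussian_mul σ Φ x).deriv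
  rw [hderiv]
  exact funext fun x => (hasDerivAt_gaussian_mul_gaussianDeriv σ Φ x).deriv

theorem gaussian_mul_gaussian_neg (σ : ℂ) (x : ℝ) : gaussian σ x * gaussian (-σ) x = 1 := by
  rw [gaussian_mul_gaussian, add_neg_cancel]
  simp [gaussian, e]

theorem exists_schwartz_gaussian_mul_eq (σ : ℂ) {ψ : ℝ → ℂ} (hψ : ContDiff ℝ ∞ ψ)
    (hψc : HasCompactSupport ψ) : ∃ Φ : 𝓢(ℝ, ℂ), (fun x => gaussian σ x * Φ x) = ψ := by
  have hsmooth : ContDiff ℝ ∞ fun x => gaussian (-σ) x * ψ x := (contDiff_gaussian (-σ)).mul hψ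
  have hsupp : HasCompactSupport fun x => gaussian (-σ) x * ψ x := hψc.mul_left
  refine ⟨hsupp.toSchwartzMap hsmooth, funext fun x => ?_⟩
  rw [HasCompactSupport.toSchwartzMap_toFun, ← mul_assoc, gaussian_mul_gaussian_neg, one_mul]

theorem tendsto_gfun_mul_gaussian_neg {τ : ℂ} (hτ : 0 < τ.im) :
    Tendsto (fun x => gfun τ x * gaussian (-τ) x) (cocompact ℝ) (𝓝 0) := by
  have heq (x : ℝ) : gfun τ x * gaussian (-τ) x = Real.sign x * gProfile τ |x| := by
    rw [gfun_eq_gProfile, mul_right_comm, gaussian_mul_gaussian_neg, one_mul]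
  simp only [heq]
  have habs : Tendsto (fun x : ℝ => |x|) (cocompact ℝ) atTop := tendsto_norm_cocompact_atTop
  refine squeeze_zero_norm (fun x => ?_)
    (tendsto_zero_iff_norm_tendsto_zero.1 ((tendsto_gProfile_atTop hτ).comp habs))
  rw [norm_mul]
  exact mul_le_of_le_one_left (norm_nonneg _) (norm_sign_le_one x)

theorem tendsto_gaussian_neg_cocompact {τ : ℂ} (hτ : 0 < τ.im) :
    Tendsto (gaussian (-τ)) (cocompact ℝ) (𝓝 0) := by
  have habs : Tendsto (fun x : ℝ => |x|) (cocompact ℝ) atTop := tendsto_norm_cocompact_atTop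
  rw [tendsto_zero_iff_norm_tendsto_zero]
  simp only [norm_gaussian, Complex.neg_im, mul_neg, neg_mul]
  refine Real.tendsto_exp_neg_atTop_nhds_zero.comp
    (Tendsto.const_mul_atTop (by positivity) ?_)
  simpa only [Function.comp_def, sq_abs] using (tendsto_pow_atTop two_ne_zero).comp habs

/-- Multiplying the difference of both sides by `gaussian (-τ)` turns `D_τ² = 0` into `U'' = 0`. -/
theorem fourier_gfun_neg_one_div {τ : ℂ} (hτ : 0 < τ.im) :
    𝓕 (gfun (-1 / τ)) = fun x => I * sqrtNegI τ * gfun τ x := by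
  have hσ := neg_one_div_im_pos hτ
  have hcont : Continuous (𝓕 (gfun (-1 / τ))) :=
    VectorFourier.fourierIntegral_continuous Real.continuous_fourierChar (L := innerₗ ℝ)
      continuous_inner (integrable_gfun hσ)
  have hbound (x : ℝ) : ‖𝓕 (gfun (-1 / τ)) x‖ ≤ ∫ y, ‖gfun (-1 / τ) y‖ :=
    VectorFourier.norm_fourierIntegral_le_integral_norm _ _ _ _ _
  let defect (x : ℝ) : ℂ := 𝓕 (gfun (-1 / τ)) x - I * sqrtNegI τ * gfun τ x
  have hdefect : Continuous defect := hcont.sub (continuous_const.mul (continuous_gfun hτ))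
  have hlim : Tendsto (fun x => defect x * gaussian (-τ) x) (cocompact ℝ) (𝓝 0) := by
    have hleft := (tendsto_gaussian_neg_cocompact hτ).zero_mul_isBoundedUnder_le
      (isBoundedUnder_of ⟨_, hbound⟩)
    have hright := (tendsto_gfun_mul_gaussian_neg hτ).const_mul (I * sqrtNegI τ)
    simpa [defect, sub_mul, mul_assoc, mul_comm (gaussian (-τ) _)] using hleft.sub hright
  have hzero : (fun x => defect x * gaussian (-τ) x) = 0 := by
    refine eq_zero_of_integral_deriv_deriv_mul_eq_zero
      (hdefect.mul (continuous_gaussian (-τ))) hlim fun ψ hψ hψc => ?_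
    obtain ⟨Φ, rfl⟩ := exists_schwartz_gaussian_mul_eq τ hψ hψc
    have hcancel (x : ℝ) :
        deriv (deriv fun y => gaussian τ y * Φ y) x * (defect x * gaussian (-τ) x) =
          𝓕 (gfun (-1 / τ)) x * gaussianDeriv τ (gaussianDeriv τ Φ) x -
            I * sqrtNegI τ * (gfun τ x * gaussianDeriv τ (gaussianDeriv τ Φ) x) := by
      rw [deriv_deriv_gaussian_mul]
      linear_combination (defect x * gaussianDeriv τ (gaussianDeriv τ Φ) x) *
        gaussian_mul_gaussian_neg τ x
    simp only [hcancel]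
    rw [integral_sub, integral_const_mul, integral_fourier_gfun_mul_gaussianDeriv hτ, sub_self]
    · exact (SchwartzMap.integrable _).bdd_mul hcont.aestronglyMeasurable
        (Eventually.of_forall hbound)
    · obtain ⟨C, hC⟩ := exists_norm_le (gaussianDeriv τ (gaussianDeriv τ Φ))
      exact ((integrable_gfun hτ).mul_bdd (SchwartzMap.continuous _).aestronglyMeasurable
        (Eventually.of_forall hC)).const_mul _
  funext x
  exact sub_eq_zero.1 ((mul_eq_zero.1 (congrFun hzero x)).resolve_right (gaussian_ne_zero _ x))

/-! ### Poisson summation where the periodisation converges locally uniformly -/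

theorem eqOn_of_integral_contDiff_smul_eq {E F : Type*} [NormedAddCommGroup E] [NormedSpace ℝ E]
    [FiniteDimensional ℝ E] [MeasurableSpace E] [BorelSpace E] [NormedAddCommGroup F]
    [NormedSpace ℝ F] [CompleteSpace F] {μ : Measure E} [IsLocallyFiniteMeasure μ]
    [μ.IsOpenPosMeasure] {O : Set E} (hO : IsOpen O) {f g : E → F}
    (hf : ContinuousOn f O) (hg : ContinuousOn g O)
    (h : ∀ φ : E → ℝ, ContDiff ℝ ∞ φ → HasCompactSupport φ → tsupport φ ⊆ O →
      ∫ x, φ x • f x ∂μ = ∫ x, φ x • g x ∂μ) : EqOn f g O := by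
  have hae : ∀ᵐ x ∂μ, x ∈ O → f x - g x = 0 := by
    refine hO.ae_eq_zero_of_integral_contDiff_smul_eq_zero
      ((hf.sub hg).locallyIntegrableOn hO.measurableSet) fun φ hφ hφc hφO => ?_
    have hint {k : E → F} (hk : ContinuousOn k O) : Integrable (fun x => φ x • k x) μ :=
      ((hφ.continuous.continuousOn.smul hk).continuous_of_tsupport_subset hO
        ((tsupport_smul_subset_left φ k).trans hφO)).integrable_of_hasCompactSupport hφc.smul_right
    simp only [smul_sub]
    rw [integral_sub (hint hf) (hint hg), h φ hφ hφc hφO, sub_self]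
  refine Measure.eqOn_open_of_ae_eq (μ := μ)
    ((ae_restrict_iff' hO.measurableSet).2 ?_) hO hf hg
  filter_upwards [hae] with x hx hxO using sub_eq_zero.1 (hx hxO)

theorem continuous_tsum_mul_e {a : ℤ → ℂ} (ha : Summable a) :
    Continuous fun x : ℝ => ∑' n : ℤ, a n * e ((n * x : ℝ) : ℂ) := by
  refine continuous_tsum (fun n => continuous_const.mul (continuous_e.comp (by fun_prop)))
    ha.norm fun n x => ?_
  rw [norm_mul, norm_e_ofReal, mul_one]

theorem integral_mul_tsum_mul_e {a : ℤ → ℂ} (ha : Summable a) {f : ℝ → ℂ} (hf : Integrable f) :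
    ∫ x, f x * ∑' n : ℤ, a n * e ((n * x : ℝ) : ℂ) = ∑' n : ℤ, a n * 𝓕 f (-n) := by
  have hint (n : ℤ) : Integrable fun x : ℝ => e ((n * x : ℝ) : ℂ) * f x :=
    hf.bdd_mul (continuous_e.comp (by fun_prop)).aestronglyMeasurable
      (Eventually.of_forall fun x => (norm_e_ofReal _).le)
  have hnorm (n : ℤ) : ∫ x : ℝ, ‖a n * (e ((n * x : ℝ) : ℂ) * f x)‖ = ‖a n‖ * ∫ x, ‖f x‖ := by
    simp only [norm_mul, norm_e_ofReal, one_mul, integral_const_mul]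
  have hswap := integral_tsum_of_summable_integral_norm (fun n => (hint n).const_mul (a n))
    ((ha.norm.mul_right _).congr fun n => (hnorm n).symm)
  simp only [mul_comm (f _), ← tsum_mul_right, mul_assoc]
  rw [← hswap]
  refine tsum_congr fun n => ?_
  rw [integral_const_mul, fourier_eq_integral_e]
  simp only [mul_neg, neg_neg, mul_comm]

theorem integral_mul_tsum_add_intCast {f g : ℝ → ℂ}
    (hint : ∀ n : ℤ, Integrable fun x => f x * g (x + n))
    (hsum : Summable fun n : ℤ => ∫ x, ‖f x * g (x + n)‖) :
    ∫ x, f x * ∑' n : ℤ, g (x + n) = ∫ x, g x * ∑' n : ℤ, f (x + n) := by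
  have hshift (n : ℤ) :
      (fun x => g x * f (x + n)) = fun x => f (x + n) * g (x + n + (-n : ℤ)) := by
    funext x
    rw [Int.cast_neg, add_neg_cancel_right, mul_comm]
  have hint' (n : ℤ) : Integrable fun x => g x * f (x + n) := by
    rw [hshift]
    exact (hint (-n)).comp_add_right _
  have hsum' : Summable fun n : ℤ => ∫ x, ‖g x * f (x + n)‖ := by
    refine ((Equiv.neg ℤ).summable_iff.2 hsum).congr fun n => ?_
    exact (integral_add_right_eq_self (fun x => ‖f x * g (x + (-n : ℤ))‖) (n : ℝ)).symm.trans
      (congrArg _ (funext fun x => congrArg _ (congrFun (hshift n) x).symm))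
  simp only [← tsum_mul_left]
  rw [← integral_tsum_of_summable_integral_norm hint hsum,
    ← integral_tsum_of_summable_integral_norm hint' hsum', ← (Equiv.neg ℤ).tsum_eq]
  refine tsum_congr fun n => ?_
  rw [hshift]
  exact (integral_add_right_eq_self (fun x => f x * g (x + (-n : ℤ))) (n : ℝ)).symm

theorem integral_schwartz_mul_tsum_add_intCast {g : ℝ → ℂ} (hg : Integrable g)
    (hgs : Summable fun n : ℤ => 𝓕 g n) (f : 𝓢(ℝ, ℂ))
    (hint : ∀ n : ℤ, Integrable fun x => f x * g (x + n))
    (hsum : Summable fun n : ℤ => ∫ x, ‖f x * g (x + n)‖) :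
    ∫ x, f x * ∑' n : ℤ, g (x + n) = ∫ x, f x * ∑' n : ℤ, 𝓕 g n * e ((n * x : ℝ) : ℂ) := by
  have hfs : Summable fun n : ℤ => (𝓕 f : 𝓢(ℝ, ℂ)) n :=
    summable_of_isBigO (Real.summable_abs_int_rpow one_lt_two)
      (((𝓕 f).isBigO_cocompact_rpow (-2)).comp_tendsto Int.tendsto_coe_cofinite)
  rw [integral_mul_tsum_add_intCast hint hsum]
  simp only [SchwartzMap.tsum_eq_tsum_fourier, fourier_coe_eq_e]
  rw [integral_mul_tsum_mul_e hfs hg, integral_mul_tsum_mul_e hgs f.integrable,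
    ← (Equiv.neg ℤ).tsum_eq]
  refine tsum_congr fun n => ?_
  rw [SchwartzMap.fourier_coe, mul_comm]
  simp

theorem eqOn_tsum_add_intCast_tsum_fourier {g : ℝ → ℂ} (hg : Continuous g) (hgi : Integrable g)
    (hgs : Summable fun n : ℤ => 𝓕 g n) {O : Set ℝ} (hO : IsOpen O)
    {u : ℤ → ℝ} (hu : Summable u) (hbound : ∀ n : ℤ, ∀ x ∈ O, ‖g (x + n)‖ ≤ u n) :
    EqOn (fun x => ∑' n : ℤ, g (x + n))
      (fun x => ∑' n : ℤ, 𝓕 g n * e ((n * x : ℝ) : ℂ)) O := by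
  refine eqOn_of_integral_contDiff_smul_eq (μ := volume) hO
    (continuousOn_tsum (fun n => (hg.comp (by fun_prop)).continuousOn) hu hbound)
    (continuous_tsum_mul_e hgs).continuousOn fun φ hφ hφc hφO => ?_
  have hfc : HasCompactSupport fun x => (φ x : ℂ) :=
    hφc.comp_left (g := fun r : ℝ => (r : ℂ)) Complex.ofReal_zero
  let f : 𝓢(ℝ, ℂ) := hfc.toSchwartzMap (Complex.ofRealCLM.contDiff.comp hφ)
  have hint (n : ℤ) : Integrable fun x => f x * g (x + n) :=
    (f.continuous.mul (hg.comp (by fun_prop))).integrable_of_hasCompactSupport hfc.mul_right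
  have hnorm (n : ℤ) (x : ℝ) : ‖f x * g (x + n)‖ ≤ u n * ‖f x‖ := by
    rw [norm_mul, mul_comm]
    by_cases hx : x ∈ O
    · exact mul_le_mul_of_nonneg_right (hbound n x hx) (norm_nonneg _)
    · have hfx : f x = 0 :=
        Complex.ofReal_eq_zero.2 (image_eq_zero_of_notMem_tsupport fun h => hx (hφO h))
      simp [hfx]
  have hsum : Summable fun n : ℤ => ∫ x, ‖f x * g (x + n)‖ := by
    refine .of_nonneg_of_le (fun n => integral_nonneg fun x => norm_nonneg _) (fun n => ?_)
      (hu.mul_right (∫ x, ‖f x‖))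
    rw [← integral_const_mul]
    exact integral_mono (hint n).norm (f.integrable.norm.const_mul _) (hnorm n)
  simpa only [Complex.real_smul] using!
    integral_schwartz_mul_tsum_add_intCast hgi hgs f hint hsum

theorem fourier_comp_mul_left {P : ℝ} (hP : 0 < P) (f : ℝ → ℂ) (w : ℝ) :
    𝓕 (fun x => f (P * x)) w = (P : ℂ)⁻¹ * 𝓕 f (w / P) := by
  have hscale := Measure.integral_comp_mul_left
    (fun v : ℝ => e ((-(v * (w / P)) : ℝ) : ℂ) * f v) P
  rw [abs_of_pos (inv_pos.2 hP), Complex.real_smul, Complex.ofReal_inv] at hscale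
  rw [fourier_eq_integral_e, fourier_eq_integral_e, ← hscale]
  refine integral_congr_ae (.of_forall fun v => ?_)
  have harg : P * v * (w / P) = v * w := by field_simp
  simp only [harg]

theorem eqOn_tsum_mul_intCast_add_tsum_fourier {P : ℝ} (hP : 0 < P) {g : ℝ → ℂ}
    (hg : Continuous g) (hgi : Integrable g) (hgs : Summable fun n : ℤ => 𝓕 g (n / P))
    {O : Set ℝ} (hO : IsOpen O) {u : ℤ → ℝ} (hu : Summable u)
    (hbound : ∀ n : ℤ, ∀ x ∈ O, ‖g (P * n + x)‖ ≤ u n) :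
    EqOn (fun x => ∑' n : ℤ, g (P * n + x))
      (fun x => (P : ℂ)⁻¹ * ∑' n : ℤ, 𝓕 g (n / P) * e ((n * x / P : ℝ) : ℂ)) O := by
  intro x hx
  have harg (n : ℤ) (y : ℝ) : P * (y + n) = P * n + P * y := by ring
  have hpoisson := eqOn_tsum_add_intCast_tsum_fourier (g := fun y => g (P * y))
    (hg.comp (by fun_prop)) (hgi.comp_mul_left' hP.ne')
    (by simpa only [fourier_comp_mul_left hP] using hgs.mul_left _)
    (hO.preimage (continuous_const_mul P)) hu
    (fun n y hy => by simpa only [harg] using hbound n _ hy)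
    (x := x / P) (by simpa [mul_div_cancel₀ x hP.ne'] using hx)
  simpa only [harg, mul_div_cancel₀ x hP.ne', fourier_comp_mul_left hP, mul_assoc, tsum_mul_left,
    mul_div_assoc] using hpoisson

theorem exists_forall_ball_le_abs_sub_of_notMem_halfIntegers {x₀ : ℝ} (hx₀ : x₀ ∉ halfIntegers) :
    ∃ δ > 0, ∀ x ∈ Metric.ball x₀ δ, ∀ n : ℤ, δ ≤ |x - ((n : ℝ) + 1 / 2)| := by
  obtain ⟨ε, hε, hball⟩ := Metric.isOpen_iff.1 isClosed_halfIntegers.isOpen_compl x₀ hx₀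
  refine ⟨ε / 2, half_pos hε, fun x hx n => ?_⟩
  by_contra! hlt
  refine hball (?_ : (n : ℝ) + 1 / 2 ∈ Metric.ball x₀ ε) ⟨n, rfl⟩
  calc dist ((n : ℝ) + 1 / 2) x₀ ≤ dist ((n : ℝ) + 1 / 2) x + dist x x₀ := dist_triangle _ _ _
    _ < ε / 2 + ε / 2 := add_lt_add (by rwa [dist_comm, Real.dist_eq]) hx
    _ = ε := add_halves ε

theorem summable_exp_neg_mul_abs_intCast {c : ℝ} (hc : 0 < c) :
    Summable fun n : ℤ => Real.exp (-c * |(n : ℝ)|) := by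
  have hnat : Summable fun n : ℕ => Real.exp (n * -c) :=
    Real.summable_exp_nat_mul_iff.2 (neg_lt_zero.2 hc)
  exact .of_nat_of_neg (hnat.congr fun n => by simp [mul_comm])
    (hnat.congr fun n => by simp [mul_comm])

theorem exists_summable_norm_gfun_mul_intCast_add_le {τ : ℂ} (hτ : 0 < τ.im) {N : ℕ} (hN : 0 < N)
    {x₀ : ℝ} (hx₀ : x₀ ∉ halfIntegers) :
    ∃ δ > 0, ∃ u : ℤ → ℝ, Summable u ∧
      ∀ n : ℤ, ∀ x ∈ Metric.ball x₀ δ, ‖gfun τ (N * n + x)‖ ≤ u n := by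
  obtain ⟨δ, hδ, hfar⟩ := exists_forall_ball_le_abs_sub_of_notMem_halfIntegers hx₀
  obtain ⟨K, hK⟩ := norm_gfun_le_exp_of_le_abs_sub hτ hδ
  set c := π * τ.im * δ
  have hc : 0 < c := by positivity
  refine ⟨δ, hδ, fun n => K * Real.exp (c * (|x₀| + δ)) * Real.exp (-(c * N) * |(n : ℝ)|),
    (summable_exp_neg_mul_abs_intCast (by positivity)).mul_left _, fun n x hx => ?_⟩
  have hgfun : ‖gfun τ (N * n + x)‖ ≤ K * Real.exp (-c * |N * n + x|) := by
    refine hK _ fun m _ => (hfar x hx (m - N * n)).trans_eq (congrArg _ ?_)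
    push_cast
    ring
  have hK₀ : 0 ≤ K := nonneg_of_mul_nonneg_left ((norm_nonneg _).trans hgfun) (Real.exp_pos _)
  have habs : N * |(n : ℝ)| - (|x₀| + δ) ≤ |N * n + x| := by
    have hx' : |x| < |x₀| + δ := by
      linarith [abs_sub_abs_le_abs_sub x x₀, Real.dist_eq x x₀ ▸ Metric.mem_ball.1 hx]
    have htri := abs_sub_abs_le_abs_sub ((N : ℝ) * n) (-x)
    rw [abs_neg, sub_neg_eq_add, abs_mul, Nat.abs_cast] at htri
    linarith
  beta_reduce
  rw [mul_assoc K, ← Real.exp_add]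
  refine hgfun.trans (mul_le_mul_of_nonneg_left (Real.exp_le_exp.2 ?_) hK₀)
  linarith [mul_le_mul_of_nonneg_left habs hc.le]

/-- For even `N` the lattice `ℤ / N` meets `ℤ + 1/2`. -/
theorem le_abs_intCast_div_sub_of_ne {N : ℕ} (hN : 0 < N) {n m : ℤ}
    (h : (n : ℝ) / N ≠ (m : ℝ) + 1 / 2) :
    1 / (2 * (N : ℝ)) ≤ |(n : ℝ) / N - ((m : ℝ) + 1 / 2)| := by
  have hnum : (n : ℝ) / N - ((m : ℝ) + 1 / 2) =
      ((2 * n - (2 * m + 1) * N : ℤ) : ℝ) / (2 * N) := by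
    push_cast
    field_simp
  have hne : 2 * n - (2 * m + 1) * N ≠ 0 := fun h₀ => h (by
    rw [← sub_eq_zero, hnum, h₀, Int.cast_zero, zero_div])
  rw [hnum, abs_div, abs_of_pos (by positivity : (0 : ℝ) < 2 * N)]
  gcongr
  exact_mod_cast Int.one_le_abs hne

theorem summable_gfun_intCast_div {τ : ℂ} (hτ : 0 < τ.im) {N : ℕ} (hN : 0 < N) :
    Summable fun n : ℤ => gfun τ ((n : ℝ) / N) := by
  obtain ⟨K, hK⟩ := norm_gfun_le_exp_of_le_abs_sub hτ (δ := 1 / (2 * N)) (by positivity)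
  refine .of_norm_bounded ((summable_exp_neg_mul_abs_intCast
    (c := π * τ.im * (1 / (2 * N)) / N) (by positivity)).mul_left K) fun n => ?_
  refine (hK _ fun m hm => le_abs_intCast_div_sub_of_ne hN hm).trans_eq ?_
  rw [abs_div, Nat.abs_cast]
  ring_nf

theorem tsum_gfun_neg_one_div_eq {τ : ℂ} (hτ : 0 < τ.im) {N : ℕ} (hN : 0 < N) {x : ℝ}
    (hx : x ∉ halfIntegers) :
    ∑' n : ℤ, gfun (-1 / τ) ((N : ℝ) * n + x) =
      I * sqrtNegI τ / N * ∑' n : ℤ, gfun τ ((n : ℝ) / N) * e ((n * x / N : ℝ) : ℂ) := by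
  have hσ := neg_one_div_im_pos hτ
  obtain ⟨δ, hδ, u, hu, hbound⟩ := exists_summable_norm_gfun_mul_intCast_add_le hσ hN hx
  refine (eqOn_tsum_mul_intCast_add_tsum_fourier (by exact_mod_cast hN) (continuous_gfun hσ)
    (integrable_gfun hσ) ?_ Metric.isOpen_ball hu hbound (Metric.mem_ball_self hδ)).trans ?_
  · simpa only [fourier_gfun_neg_one_div hτ] using (summable_gfun_intCast_div hτ hN).mul_left _
  · simp only [fourier_gfun_neg_one_div hτ, mul_assoc, tsum_mul_left, Complex.ofReal_natCast]
    ring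

theorem cpow_neg_half_mul_sqrtNegI {τ : ℂ} (hτ : 0 < τ.im) :
    τ ^ (-(1 / 2) : ℂ) * (I * sqrtNegI τ) = e ((1 : ℂ) / 8) := by
  have hτ₀ := ne_zero_of_im_pos hτ
  have hlog : Complex.log (-I * τ) = Complex.log τ - π / 2 * I := by
    rw [Complex.log_mul (neg_ne_zero.2 I_ne_zero) hτ₀, Complex.log_neg_I]
    · ring
    · rw [Complex.arg_neg_I]
      have hle := Complex.arg_le_pi τ
      have hnonneg := Complex.arg_nonneg_iff.2 hτ.le
      constructor <;> linarith [Real.pi_pos]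
  rw [sqrtNegI, e, Complex.cpow_def_of_ne_zero hτ₀,
    Complex.cpow_def_of_ne_zero (mul_ne_zero (neg_ne_zero.2 I_ne_zero) hτ₀), hlog]
  calc cexp (Complex.log τ * -(1 / 2)) * (I * cexp ((Complex.log τ - π / 2 * I) * (1 / 2)))
      = cexp (Complex.log τ * -(1 / 2)) *
          (cexp (π / 2 * I) * cexp ((Complex.log τ - π / 2 * I) * (1 / 2))) := by
        rw [Complex.exp_pi_div_two_mul_I]
    _ = cexp (2 * π * I * (1 / 8)) := by
        rw [← Complex.exp_add, ← Complex.exp_add]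
        ring_nf

end

theorem Gfun_poisson_general (N : ℕ) (hN : 0 < N) (τ : ℂ) (hτ : 0 < τ.im) (x₀ : ℝ) :
    Summable (fun n : ℤ => ‖gfun τ ((n : ℝ) / N) * e ((((n : ℝ) * x₀ / N : ℝ) : ℂ))‖) ∧
    Filter.Tendsto
      (fun x : ℝ => τ ^ (-(1/2) : ℂ) * ∑' n : ℤ, gfun (-1/τ) ((N : ℝ) * n + x))
      (nhdsWithin x₀ {x₀}ᶜ)
      (nhds (e ((1:ℂ)/8) / N *
        ∑' n : ℤ, gfun τ ((n : ℝ) / N) * e ((((n : ℝ) * x₀ / N : ℝ) : ℂ)))) := by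
  have hsum := summable_gfun_intCast_div hτ hN
  refine ⟨hsum.norm.congr fun n => by rw [norm_mul, norm_e_ofReal, mul_one], ?_⟩
  have hcont : Continuous fun x : ℝ =>
      ∑' n : ℤ, gfun τ ((n : ℝ) / N) * e ((((n : ℝ) * x / N : ℝ) : ℂ)) := by
    simpa only [Function.comp_def, id_eq, ← mul_div_assoc] using
      (continuous_tsum_mul_e hsum).comp (continuous_id.div_const (N : ℝ))
  refine ((hcont.tendsto x₀).mono_left nhdsWithin_le_nhds |>.const_mul _).congr' ?_
  filter_upwards [eventually_notMem_halfIntegers x₀] with x hx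
  rw [tsum_gfun_neg_one_div_eq hτ hN hx, ← cpow_neg_half_mul_sqrtNegI hτ]
  ring

/-- Poisson-summation limit formula for `τ^{-1/2} G_{-1/τ}`. -/
theorem Gfun_poisson (N : ℕ) (hN : 0 < N) (hNe : Even N) (τ : ℂ) (hτ : 0 < τ.im) (x₀ : ℝ) :
    Summable (fun n : ℤ => ‖gfun τ ((n : ℝ) / N) * e ((((n : ℝ) * x₀ / N : ℝ) : ℂ))‖) ∧
    Filter.Tendsto
      (fun x : ℝ => τ ^ (-(1/2) : ℂ) * ∑' n : ℤ, gfun (-1/τ) ((N : ℝ) * n + x))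
      (nhdsWithin x₀ {x₀}ᶜ)
      (nhds (e ((1:ℂ)/8) / N *
        ∑' n : ℤ, gfun τ ((n : ℝ) / N) * e ((((n : ℝ) * x₀ / N : ℝ) : ℂ)))) :=
  Gfun_poisson_general N hN τ hτ x₀
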